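/- arXiv:1308.1286 — 2 statements merged into one kernel-verified Lean document; each statement's English description precedes it below -/
import Mathlib

section
/- For every positive integer m and every ε > 0 there exists l such that for every finite field F_q and every integer n ≥ 2, there is a subset S ⊆ SL_n(F_q) with |S| ≤ ε · |SL_n(F_q)| such that every g ∈ SL_n(F_q) \ S satisfies #{h ∈ SL_n(F_q) : h^m = g^m} < q^{l · (log n)^4}. -/
/-!
Let `q = |F|` and let `e` be a monic polynomial of degree less than `dim V`. There are at most
`|SL(V)|` pairs `(g, v)` for which `e` is the minimal polynomial of the vector `v` under `g`,
because `SL(V)` is transitive on linearly independent families of `deg e` vectors; for larger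
`deg e` the bound loses a factor `q`. Summing over the boundedly many monic divisors `e` of
`Q(X ^ m)`, where `Q` is irreducible of degree less than `dim V / m`, the number of `g` for which
`Q(g ^ m)` has a kernel of dimension at least `j` is `O(q ^ (-j) |SL(V)|)`.

With `j = deg Q` and a sum over the at most `q ^ d / d` monic irreducible `Q` of each degree `d`,
the minimal polynomial of `g ^ m` has `O(log (dim V))` irreducible factors of degree less than
`dim V / m` on average, so outside of a small set of `g` by Markov's inequality, and always at most
`m` others.
The same count with `Q ^ k` shows that, outside of another small set, the `Q`-primary component of
`g ^ m` has dimension less than `k * deg Q` for a bounded `k`, and is at most one-dimensional over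
the field `F[X] / Q` once `deg Q` is large.

An `m`-th root of `g ^ m` preserves each primary component. It has at most `m` restrictions to a
component that is one-dimensional over `F[X] / Q`, and `q ^ O(1)` restrictions to a component of
bounded dimension, hence there are `q ^ O(log (dim V))` roots in total.
-/

open Polynomial UniqueFactorizationMonoid
open Module hiding toModuleEnd
open DistribMulAction (toModuleEnd)

section VectorMinpoly

variable {F V : Type*} [Field F] [AddCommGroup V] [Module F V]

/-- The linear map `a ↦ a(x) v`, whose range is the cyclic subspace generated by `v` under `x`. -/
noncomputable def cyclicMap (x : End F V) (v : V) : F[X] →ₗ[F] V :=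
  LinearMap.applyₗ v ∘ₗ (aeval x).toLinearMap

@[simp]
theorem cyclicMap_apply (x : End F V) (v : V) (a : F[X]) : cyclicMap x v a = aeval x a v := rfl

theorem aeval_mul_apply (x : End F V) (a b : F[X]) (v : V) :
    aeval x (a * b) v = aeval x a (aeval x b v) := by
  rw [map_mul, Module.End.mul_apply]

theorem aeval_apply_eq_zero_of_dvd {x : End F V} {a b : F[X]} {v : V} (hab : a ∣ b)
    (ha : aeval x a v = 0) : aeval x b v = 0 := by
  obtain ⟨c, rfl⟩ := hab
  rw [mul_comm, aeval_mul_apply, ha, map_zero]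

theorem aeval_aeval_apply_eq_zero {x : End F V} {Q : F[X]} {v : V} (hv : aeval x Q v = 0)
    (a : F[X]) : aeval x Q (aeval x a v) = 0 := by
  rw [← aeval_mul_apply]
  exact aeval_apply_eq_zero_of_dvd (dvd_mul_right Q a) hv

theorem exists_aeval_aeval_apply_eq_self {x : End F V} {a Q : F[X]} (h : IsCoprime a Q) {v : V}
    (hv : aeval x Q v = 0) : ∃ b : F[X], aeval x b (aeval x a v) = v := by
  obtain ⟨b, c, hbc⟩ := h
  have hone := congr(aeval x $hbc v)
  rw [map_add, LinearMap.add_apply, aeval_mul_apply, aeval_mul_apply, hv, map_zero, add_zero,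
    map_one, Module.End.one_apply] at hone
  exact ⟨b, hone⟩

theorem isCoprime_of_mem_degreeLT {Q a : F[X]} (hQ : Irreducible Q)
    (ha : a ∈ degreeLT F Q.natDegree) (ha0 : a ≠ 0) : IsCoprime a Q := by
  refine (hQ.coprime_iff_not_dvd.2 fun hdvd ↦ ha0 ?_).symm
  exact eq_zero_of_dvd_of_natDegree_lt hdvd
    ((natDegree_lt_iff_degree_lt ha0).2 (mem_degreeLT.1 ha))

open Classical in
/-- The minimal polynomial of the vector `v` under `x`: the normalized generator of the ideal of
all `a` with `a(x) v = 0`. It is `0` if no nonzero polynomial in `x` kills `v`. -/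
noncomputable def vectorMinpoly (x : End F V) (v : V) : F[X] :=
  normalize (Submodule.IsPrincipal.generator
    (Ideal.torsionOf F[X] (AEval' x) (AEval'.of x v)))

theorem vectorMinpoly_dvd_iff {x : End F V} {v : V} {a : F[X]} :
    vectorMinpoly x v ∣ a ↔ aeval x a v = 0 := by
  classical
  rw [vectorMinpoly, normalize_dvd_iff, ← Submodule.IsPrincipal.mem_iff_generator_dvd,
    Ideal.mem_torsionOf_iff, ← AEval.of_aeval_smul, LinearEquiv.map_eq_zero_iff,
    Module.End.smul_def]

theorem monic_vectorMinpoly {x : End F V} {v : V} {a : F[X]} (ha : a ≠ 0)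
    (hv : aeval x a v = 0) : (vectorMinpoly x v).Monic := by
  classical
  refine monic_normalize fun h ↦ ha (zero_dvd_iff.1 ?_)
  rw [← normalize_eq_zero.2 h]
  exact vectorMinpoly_dvd_iff.2 hv

theorem linearIndependent_pow_apply (x : End F V) (v : V) :
    LinearIndependent F fun i : Fin (vectorMinpoly x v).natDegree ↦ (x ^ (i : ℕ)) v := by
  set n := (vectorMinpoly x v).natDegree
  have hker : LinearMap.ker ((cyclicMap x v).domRestrict (degreeLT F n)) = ⊥ := by
    refine LinearMap.ker_eq_bot'.2 fun a ha ↦ Subtype.ext ?_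
    by_contra ha0
    have hle := natDegree_le_of_dvd (vectorMinpoly_dvd_iff.2 ha) ha0
    exact hle.not_gt ((natDegree_lt_iff_degree_lt ha0).2 (mem_degreeLT.1 a.2))
  simpa [Function.comp_def, degreeLT.basis_val] using
    (degreeLT.basis F n).linearIndependent.map' _ hker

theorem natDegree_vectorMinpoly_le_finrank_ker [FiniteDimensional F V] {x : End F V} {v : V}
    {a : F[X]} (hv : aeval x a v = 0) :
    (vectorMinpoly x v).natDegree ≤ finrank F (LinearMap.ker (aeval x a)) := by
  have hmem (i : ℕ) : (x ^ i) v ∈ LinearMap.ker (aeval x a) := by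
    simpa using aeval_aeval_apply_eq_zero hv (X ^ i)
  have hli : LinearIndependent F
      fun i : Fin (vectorMinpoly x v).natDegree ↦ (⟨(x ^ (i : ℕ)) v, hmem i⟩ : LinearMap.ker _) :=
    .of_comp (LinearMap.ker (aeval x a)).subtype (linearIndependent_pow_apply x v)
  simpa using hli.fintype_card_le_finrank

end VectorMinpoly

section IrreducibleKernel

variable {F V : Type*} [Field F] [AddCommGroup V] [Module F V] [FiniteDimensional F V]
  {x : End F V} {Q : F[X]}

theorem ker_aeval_pow_succ_le (hQ : Irreducible Q) {k : ℕ}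
    (h : finrank F (LinearMap.ker (aeval x (Q ^ (k + 1)))) < (k + 1) * Q.natDegree) :
    LinearMap.ker (aeval x (Q ^ (k + 1))) ≤ LinearMap.ker (aeval x (Q ^ k)) := by
  intro v hv
  obtain ⟨i, -, hassoc⟩ := (dvd_prime_pow hQ.prime _).1 (vectorMinpoly_dvd_iff.2 hv)
  have hdeg := natDegree_vectorMinpoly_le_finrank_ker hv
  rw [natDegree_eq_of_degree_eq (degree_eq_degree_of_associated hassoc), natDegree_pow] at hdeg
  have hik : i < k + 1 := lt_of_mul_lt_mul_right (hdeg.trans_lt h) (Nat.zero_le _)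
  exact vectorMinpoly_dvd_iff.1 (hassoc.dvd.trans (pow_dvd_pow Q (Nat.lt_succ_iff.1 hik)))

theorem ker_aeval_pow_le (hQ : Irreducible Q) {k : ℕ}
    (h : finrank F (LinearMap.ker (aeval x (Q ^ (k + 1)))) < (k + 1) * Q.natDegree) (j : ℕ) :
    LinearMap.ker (aeval x (Q ^ j)) ≤ LinearMap.ker (aeval x (Q ^ k)) := by
  induction j with
  | zero => simp [Module.End.one_eq_id]
  | succ j ih =>
    intro v hv
    refine ker_aeval_pow_succ_le hQ h ?_
    rw [LinearMap.mem_ker, pow_succ, aeval_mul_apply]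
    apply ih
    rwa [LinearMap.mem_ker, ← aeval_mul_apply, ← pow_succ]

theorem exists_aeval_apply_eq (hQ : Irreducible Q)
    (h : finrank F (LinearMap.ker (aeval x Q)) < 2 * Q.natDegree) {v w : V}
    (hv : aeval x Q v = 0) (hv0 : v ≠ 0) (hw : aeval x Q w = 0) :
    ∃ a : F[X], aeval x a v = w := by
  let T : (degreeLT F Q.natDegree × degreeLT F Q.natDegree) →ₗ[F] LinearMap.ker (aeval x Q) :=
    (((cyclicMap x v).domRestrict _).coprod ((cyclicMap x w).domRestrict _)).codRestrict _ fun p ↦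
      add_mem (aeval_aeval_apply_eq_zero hv p.1) (aeval_aeval_apply_eq_zero hw p.2)
  have hT : LinearMap.ker T ≠ ⊥ := LinearMap.ker_ne_bot_of_finrank_lt <| by
    rw [finrank_prod]
    simpa [finrank_eq_card_basis (degreeLT.basis F Q.natDegree), ← two_mul] using h
  obtain ⟨⟨a, b⟩, hab, hne⟩ := (Submodule.ne_bot_iff _).1 hT
  replace hab : aeval x a.1 v + aeval x b.1 w = 0 := congr_arg Subtype.val hab
  have hb0 : b.1 ≠ 0 := fun hb0 ↦ by
    have ha0 : a.1 ≠ 0 := fun ha0 ↦ hne (Prod.ext (Subtype.ext ha0) (Subtype.ext hb0))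
    obtain ⟨c, hc⟩ := exists_aeval_aeval_apply_eq_self (isCoprime_of_mem_degreeLT hQ a.2 ha0) hv
    rw [hb0, map_zero, LinearMap.zero_apply, add_zero] at hab
    rw [hab, map_zero] at hc
    exact hv0 hc.symm
  obtain ⟨c, hc⟩ := exists_aeval_aeval_apply_eq_self (isCoprime_of_mem_degreeLT hQ b.2 hb0) hw
  refine ⟨-(c * a), ?_⟩
  rw [map_neg, LinearMap.neg_apply, aeval_mul_apply, eq_neg_of_add_eq_zero_left hab, map_neg, hc,
    neg_neg]

end IrreducibleKernel

section Roots

variable {F V : Type*} [Field F] [AddCommGroup V] [Module F V] {y h : End F V} {m : ℕ}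

/-- The restrictions to `U` of the `m`-th roots of `y`. The roots of `y` are counted one summand of
a decomposition of `V` at a time, through these sets. -/
def rootRestrictions (y : End F V) (m : ℕ) (U : Submodule F V) : Set (U →ₗ[F] V) :=
  {φ | ∃ h : End F V, h ^ m = y ∧ h.domRestrict U = φ}

theorem apply_aeval_apply_of_pow_eq (hh : h ^ m = y) (f : F[X]) (v : V) :
    h (aeval y f v) = aeval y f (h v) := by
  have hcomm : Commute h (aeval y f) :=
    Algebra.commute_of_mem_adjoin_singleton_of_commute (aeval_mem_adjoin_singleton F y)
      (hh ▸ Commute.self_pow h m)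
  exact congr($hcomm.eq v)

theorem natCard_pow_eq_le_prod [Finite V] {ι : Type*} (y : End F V) (m : ℕ) (s : Finset ι)
    (U : ι → Submodule F V) (hU : ⨆ i ∈ s, U i = ⊤) :
    Nat.card {h : End F V // h ^ m = y} ≤ ∏ i ∈ s, (rootRestrictions y m (U i)).ncard := by
  have (i : ι) : Finite (U i →ₗ[F] V) := DFunLike.finite _
  let restrict (h : {h : End F V // h ^ m = y}) (i : s) : rootRestrictions y m (U i) :=
    ⟨h.1.domRestrict (U i), h.1, h.2, rfl⟩
  have hinj : Function.Injective restrict := fun h h' heq ↦ by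
    refine Subtype.ext (LinearMap.eqLocus_eq_top.1 (top_le_iff.1 ?_))
    rw [← hU]
    exact iSup₂_le fun i hi v hv ↦ congr($(congr_fun heq ⟨i, hi⟩).1 ⟨v, hv⟩)
  refine (Nat.card_le_card_of_injective restrict hinj).trans_eq ?_
  rw [Nat.card_pi]
  exact Finset.prod_coe_sort s fun i ↦ (rootRestrictions y m (U i)).ncard

theorem ncard_rootRestrictions_ker_le_pow [Finite F] [FiniteDimensional F V] (y : End F V) (m : ℕ)
    (f : F[X]) : (rootRestrictions y m (LinearMap.ker (aeval y f))).ncard ≤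
      Nat.card F ^ finrank F (LinearMap.ker (aeval y f)) ^ 2 := by
  set U := LinearMap.ker (aeval y f)
  have : Finite (End F U) := Module.finite_of_finite F
  have hsub : rootRestrictions y m U ⊆ Set.range fun φ : End F U ↦ U.subtype ∘ₗ φ := by
    rintro _ ⟨h, hh, rfl⟩
    refine ⟨h.restrict (p := U) (q := U) fun v hv ↦ ?_, rfl⟩
    rw [LinearMap.mem_ker, ← apply_aeval_apply_of_pow_eq hh, hv, map_zero]
  calc (rootRestrictions y m U).ncard
    _ ≤ (Set.range fun φ : End F U ↦ U.subtype ∘ₗ φ).ncard := Set.ncard_le_ncard hsub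
    _ ≤ Nat.card (End F U) := Finite.card_range_le _
    _ = Nat.card F ^ finrank F U ^ 2 := by
      rw [Module.natCard_eq_pow_finrank (K := F), Module.finrank_linearMap, sq]

theorem pow_apply_eq_aeval_pow_apply (hh : h ^ m = y) {a : F[X]} {v : V}
    (hv : h v = aeval y a v) (i : ℕ) : (h ^ i) v = aeval y (a ^ i) v := by
  induction i with
  | zero => simp
  | succ i ih =>
    rw [pow_succ', Module.End.mul_apply, ih, apply_aeval_apply_of_pow_eq hh, hv,
      ← aeval_mul_apply, pow_succ]

theorem dvd_pow_sub_X_of_pow_eq {Q : F[X]} (hQ : Irreducible Q) (hh : h ^ m = y) {a : F[X]} {v : V}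
    (hv : h v = aeval y a v) (hQv : aeval y Q v = 0) (hv0 : v ≠ 0) : Q ∣ a ^ m - X := by
  by_contra hdvd
  obtain ⟨b, hb⟩ := exists_aeval_aeval_apply_eq_self (hQ.coprime_iff_not_dvd.2 hdvd).symm hQv
  rw [map_sub, LinearMap.sub_apply, ← pow_apply_eq_aeval_pow_apply hh hv, hh, aeval_X, sub_self,
    map_zero] at hb
  exact hv0 hb.symm

theorem eq_of_mem_rootRestrictions_of_apply_eq {U : Submodule F V} {v : U}
    (hcyc : ∀ w : U, ∃ a : F[X], aeval y a (v : V) = w) {φ ψ : U →ₗ[F] V}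
    (hφ : φ ∈ rootRestrictions y m U) (hψ : ψ ∈ rootRestrictions y m U) (h : φ v = ψ v) :
    φ = ψ := by
  obtain ⟨g, hg, rfl⟩ := hφ
  obtain ⟨g', hg', rfl⟩ := hψ
  ext w
  obtain ⟨a, ha⟩ := hcyc w
  simp only [LinearMap.domRestrict_apply] at h ⊢
  rw [← ha, apply_aeval_apply_of_pow_eq hg, h, apply_aeval_apply_of_pow_eq hg']

/-- On a cyclic kernel, isomorphic to `F[X] / Q`, a root of `y` is multiplication by an `m`-th root
of `X` in the field `F[X] / Q`. -/
theorem ncard_rootRestrictions_ker_le [FiniteDimensional F V] (hm : 0 < m) {Q : F[X]}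
    (hQ : Irreducible Q) (hd : finrank F (LinearMap.ker (aeval y Q)) < 2 * Q.natDegree) :
    (rootRestrictions y m (LinearMap.ker (aeval y Q))).ncard ≤ m := by
  classical
  set U := LinearMap.ker (aeval y Q)
  rcases subsingleton_or_nontrivial U with hsub | hnt
  · exact (Set.ncard_le_one_of_subsingleton _).trans hm
  obtain ⟨v, hv0⟩ := exists_ne (0 : U)
  replace hv0 : (v : V) ≠ 0 := by simpa using hv0
  have hcyc (w : U) : ∃ a : F[X], aeval y a (v : V) = w := exists_aeval_apply_eq hQ hd v.2 hv0 w.2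
  have hpoly (φ : U →ₗ[F] V) (hφ : φ ∈ rootRestrictions y m U) :
      ∃ a : F[X], aeval y a (v : V) = φ v := by
    obtain ⟨h, hh, rfl⟩ := hφ
    refine exists_aeval_apply_eq hQ hd v.2 hv0 ?_
    rw [LinearMap.domRestrict_apply, ← apply_aeval_apply_of_pow_eq hh, v.2, map_zero]
  choose! a ha using hpoly
  have : Fact (Irreducible Q) := ⟨hQ⟩
  have hroot : ∀ φ ∈ rootRestrictions y m U,
      AdjoinRoot.mk Q (a φ) ∈ ((nthRoots m (AdjoinRoot.root Q)).toFinset : Set (AdjoinRoot Q)) := by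
    intro φ hφ
    obtain ⟨h, hh, rfl⟩ := id hφ
    rw [Finset.mem_coe, Multiset.mem_toFinset, mem_nthRoots hm, ← map_pow, ← AdjoinRoot.mk_X,
      AdjoinRoot.mk_eq_mk]
    exact dvd_pow_sub_X_of_pow_eq hQ hh (ha _ hφ).symm v.2 hv0
  have hinj : (rootRestrictions y m U).InjOn fun φ ↦ AdjoinRoot.mk Q (a φ) := by
    intro φ hφ ψ hψ heq
    refine eq_of_mem_rootRestrictions_of_apply_eq hcyc hφ hψ ?_
    rw [← ha φ hφ, ← ha ψ hψ, ← sub_eq_zero, ← LinearMap.sub_apply, ← map_sub]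
    exact aeval_apply_eq_zero_of_dvd (AdjoinRoot.mk_eq_mk.1 heq) v.2
  refine (Set.ncard_le_ncard_of_injOn _ hroot hinj (Finset.finite_toSet _)).trans ?_
  rw [Set.ncard_coe_finset]
  exact (Multiset.toFinset_card_le _).trans (card_nthRoots _ _)

end Roots

section PrimaryDecomposition

variable {F V : Type*} [Field F] [AddCommGroup V] [Module F V]

theorem ker_aeval_prod_le_iSup {ι : Type*} (x : End F V) (s : Finset ι) (f : ι → F[X])
    (hf : Set.Pairwise (s : Set ι) fun i j ↦ IsCoprime (f i) (f j)) :
    LinearMap.ker (aeval x (∏ i ∈ s, f i)) ≤ ⨆ i ∈ s, LinearMap.ker (aeval x (f i)) := by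
  classical
  induction s using Finset.induction_on with
  | empty => simp [Module.End.one_eq_id]
  | insert i s hi ih =>
    have hcop : IsCoprime (f i) (∏ j ∈ s, f j) := IsCoprime.prod_right fun j hj ↦
      hf (Finset.mem_insert_self i s) (Finset.mem_insert_of_mem hj)
        (ne_of_mem_of_not_mem hj hi).symm
    rw [Finset.prod_insert hi, Finset.iSup_insert,
      ← sup_ker_aeval_eq_ker_aeval_mul_of_coprime _ hcop]
    exact sup_le_sup_left (ih (hf.mono (Finset.coe_subset.2 (Finset.subset_insert i s)))) _

theorem mem_primeFactors_minpoly_iff [DecidableEq F] [FiniteDimensional F V] {x : End F V}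
    {Q : F[X]} : Q ∈ primeFactors (minpoly F x) ↔ Irreducible Q ∧ Q.Monic ∧ Q ∣ minpoly F x := by
  rw [mem_primeFactors, Polynomial.mem_normalizedFactors_iff
    (minpoly.ne_zero (IsIntegral.of_finite F x))]

theorem exists_iSup_ker_aeval_pow_eq_top [DecidableEq F] [FiniteDimensional F V] (x : End F V) :
    ∃ N : ℕ, ⨆ Q ∈ primeFactors (minpoly F x), LinearMap.ker (aeval x (Q ^ N)) = ⊤ := by
  obtain ⟨N, hN⟩ := exists_dvd_radical_self_pow (minpoly.ne_zero (IsIntegral.of_finite F x))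
  refine ⟨N, top_le_iff.1 (le_trans ?_ (ker_aeval_prod_le_iSup x _ _ ?_))⟩
  · intro v _
    refine aeval_apply_eq_zero_of_dvd (a := minpoly F x) ?_ (by rw [minpoly.aeval]; rfl)
    rwa [Finset.prod_pow]
  · exact fun P hP Q hQ hne ↦ (pairwise_primeFactors_isRelPrime hP hQ hne).isCoprime.pow

variable [Finite F] [FiniteDimensional F V] {x : End F V} {m k D : ℕ}

theorem exists_ker_le_and_ncard_rootRestrictions_le (hm : 0 < m) {Q : F[X]} (hQ : Irreducible Q)
    (hk : finrank F (LinearMap.ker (aeval x (Q ^ (k + 1)))) < (k + 1) * Q.natDegree)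
    (hD : D < Q.natDegree → finrank F (LinearMap.ker (aeval x (Q ^ 2))) < 2 * Q.natDegree) :
    ∃ U : Submodule F V, (∀ j, LinearMap.ker (aeval x (Q ^ j)) ≤ U) ∧
      (rootRestrictions x m U).ncard ≤ Nat.card F ^ (m + ((k + 1) * D) ^ 2) := by
  have hq : 1 < Nat.card F := Finite.one_lt_card
  rcases lt_or_ge D Q.natDegree with hlt | hle
  · have hker := ker_aeval_pow_le (k := 1) hQ (hD hlt)
    rw [pow_one] at hker
    refine ⟨_, hker, (ncard_rootRestrictions_ker_le hm hQ ?_).trans ?_⟩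
    · refine (Submodule.finrank_mono fun _ ↦ ?_).trans_lt (hD hlt)
      exact aeval_apply_eq_zero_of_dvd (dvd_pow_self Q two_ne_zero)
    · exact (Nat.lt_pow_self hq).le.trans (Nat.pow_le_pow_right hq.le (Nat.le_add_right _ _))
  · refine ⟨_, ker_aeval_pow_le hQ hk, (ncard_rootRestrictions_ker_le_pow x m _).trans ?_⟩
    refine Nat.pow_le_pow_right hq.le (le_add_left (Nat.pow_le_pow_left ?_ 2))
    calc finrank F (LinearMap.ker (aeval x (Q ^ k)))
      _ ≤ finrank F (LinearMap.ker (aeval x (Q ^ (k + 1)))) := Submodule.finrank_mono fun _ ↦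
        aeval_apply_eq_zero_of_dvd (pow_dvd_pow Q k.le_succ)
      _ ≤ (k + 1) * Q.natDegree := hk.le
      _ ≤ (k + 1) * D := Nat.mul_le_mul_left _ hle

theorem natCard_pow_eq_le [DecidableEq F] (hm : 0 < m)
    (hk : ∀ Q : F[X], Q.Monic → Irreducible Q →
      finrank F (LinearMap.ker (aeval x (Q ^ (k + 1)))) < (k + 1) * Q.natDegree)
    (hD : ∀ Q : F[X], Q.Monic → Irreducible Q → D < Q.natDegree →
      finrank F (LinearMap.ker (aeval x (Q ^ 2))) < 2 * Q.natDegree) :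
    Nat.card {h : End F V // h ^ m = x} ≤
      (Nat.card F ^ (m + ((k + 1) * D) ^ 2)) ^ (primeFactors (minpoly F x)).card := by
  have : Finite V := Module.finite_of_finite F
  have hex (Q : F[X]) (hQ : Q ∈ primeFactors (minpoly F x)) :=
    have ⟨hirr, hmonic, _⟩ := mem_primeFactors_minpoly_iff.1 hQ
    exists_ker_le_and_ncard_rootRestrictions_le hm hirr (hk Q hmonic hirr) (hD Q hmonic hirr)
  choose! U hker hcard using hex
  obtain ⟨N, hN⟩ := exists_iSup_ker_aeval_pow_eq_top x
  have hU : ⨆ Q ∈ primeFactors (minpoly F x), U Q = ⊤ :=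
    top_le_iff.1 (hN.ge.trans (iSup₂_mono fun Q hQ ↦ hker Q hQ N))
  exact (natCard_pow_eq_le_prod x m _ U hU).trans (Finset.prod_le_pow_card _ _ _ hcard)

end PrimaryDecomposition

section Factors

variable {F : Type*} [Field F]

theorem natDegree_le_of_dvd_comp {P Q R : F[X]} (hP : Irreducible P) (hQ : Irreducible Q)
    (h : P ∣ Q.comp R) : Q.natDegree ≤ P.natDegree := by
  have : Fact (Irreducible P) := ⟨hP⟩
  have : FiniteDimensional F (AdjoinRoot P) := (AdjoinRoot.powerBasis hP.ne_zero).finite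
  set b := aeval (AdjoinRoot.root P) R
  have hb : aeval b Q = 0 := by
    rw [← aeval_comp, AdjoinRoot.aeval_eq]
    exact AdjoinRoot.mk_eq_zero.2 h
  have hassoc : Associated (minpoly F b) Q :=
    (minpoly.irreducible (IsIntegral.of_finite F b)).associated_of_dvd hQ (minpoly.dvd F b hb)
  calc Q.natDegree
    _ = (minpoly F b).natDegree :=
      natDegree_eq_of_degree_eq (degree_eq_degree_of_associated hassoc.symm)
    _ ≤ finrank F (AdjoinRoot P) := minpoly.natDegree_le b
    _ = P.natDegree := by
      rw [(AdjoinRoot.powerBasis hP.ne_zero).finrank, AdjoinRoot.powerBasis_dim]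

theorem comp_ne_zero_of_natDegree_pos {Q R : F[X]} (hQ : 0 < Q.natDegree) (hR : 0 < R.natDegree) :
    Q.comp R ≠ 0 :=
  ne_zero_of_natDegree_gt (n := 0) (natDegree_comp (p := Q) ▸ Nat.mul_pos hQ hR)

variable [DecidableEq F]

theorem card_normalizedFactors_mul_le {f : F[X]} (hf : f ≠ 0) {d : ℕ}
    (h : ∀ P, Irreducible P → P ∣ f → d ≤ P.natDegree) :
    (normalizedFactors f).card * d ≤ f.natDegree := by
  calc (normalizedFactors f).card * d
    _ = ((normalizedFactors f).map natDegree).card • d := by rw [Multiset.card_map, smul_eq_mul]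
    _ ≤ ((normalizedFactors f).map natDegree).sum := by
      refine Multiset.card_nsmul_le_sum fun i hi ↦ ?_
      obtain ⟨P, hP, rfl⟩ := Multiset.mem_map.1 hi
      exact h P (irreducible_of_normalized_factor P hP) (dvd_of_mem_normalizedFactors hP)
    _ = (normalizedFactors f).prod.natDegree :=
      (natDegree_multiset_prod _ (zero_notMem_normalizedFactors f)).symm
    _ = f.natDegree :=
      natDegree_eq_of_degree_eq (degree_eq_degree_of_associated (prod_normalizedFactors hf))

theorem card_normalizedFactors_comp_le {Q R : F[X]} (hQ : Irreducible Q) (hR : 0 < R.natDegree) :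
    (normalizedFactors (Q.comp R)).card ≤ R.natDegree := by
  refine Nat.le_of_mul_le_mul_right ?_ hQ.natDegree_pos
  rw [mul_comm R.natDegree, ← natDegree_comp]
  exact card_normalizedFactors_mul_le (comp_ne_zero_of_natDegree_pos hQ.natDegree_pos hR)
    fun P hP hdvd ↦ natDegree_le_of_dvd_comp hP hQ hdvd

/-- The monic divisors of a nonzero polynomial, as the products of the submultisets of its monic
irreducible factors. -/
noncomputable def monicDivisors (f : F[X]) : Finset F[X] :=
  (Finset.Iic (normalizedFactors f)).image Multiset.prod

theorem mem_monicDivisors {e f : F[X]} (hf : f ≠ 0) :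
    e ∈ monicDivisors f ↔ e.Monic ∧ e ∣ f := by
  simp only [monicDivisors, Finset.mem_image, Finset.mem_Iic]
  constructor
  · rintro ⟨s, hs, rfl⟩
    have hmonic : (s.map id).prod.Monic := monic_multiset_prod_of_monic s id fun P hP ↦
      ((Polynomial.mem_normalizedFactors_iff hf).1 (Multiset.mem_of_le hs hP)).2.1
    rw [Multiset.map_id] at hmonic
    exact ⟨hmonic, (Multiset.prod_dvd_prod_of_le hs).trans (prod_normalizedFactors hf).dvd⟩
  · rintro ⟨he, hdvd⟩
    refine ⟨normalizedFactors e,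
      (dvd_iff_normalizedFactors_le_normalizedFactors he.ne_zero hf).1 hdvd, ?_⟩
    rw [prod_normalizedFactors_eq he.ne_zero, he.normalize_eq_self]

theorem card_monicDivisors_le (f : F[X]) :
    (monicDivisors f).card ≤ ((normalizedFactors f).card + 1) ^ (primeFactors f).card := by
  refine Finset.card_image_le.trans ?_
  rw [Multiset.card_Iic]
  refine (Finset.prod_le_pow_card _ _ ((normalizedFactors f).card + 1) fun P _ ↦ ?_).trans_eq ?_
  · exact Nat.succ_le_succ (Multiset.count_le_card _ _)
  · rw [toFinset_normalizedFactors]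

theorem card_monicDivisors_comp_pow_le {Q R : F[X]} (hQ : Irreducible Q) (hR : 0 < R.natDegree)
    (k : ℕ) : (monicDivisors (Q.comp R ^ k)).card ≤ (R.natDegree * k + 1) ^ R.natDegree := by
  have hcard := card_normalizedFactors_comp_le hQ hR
  have hprime : (primeFactors (Q.comp R ^ k)).card ≤ R.natDegree := by
    rcases eq_or_ne k 0 with rfl | hk
    · simp
    · rw [primeFactors_pow _ hk, ← toFinset_normalizedFactors]
      exact (Multiset.toFinset_card_le _).trans hcard
  calc (monicDivisors (Q.comp R ^ k)).card
    _ ≤ ((normalizedFactors (Q.comp R ^ k)).card + 1) ^ (primeFactors (Q.comp R ^ k)).card :=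
      card_monicDivisors_le _
    _ ≤ (R.natDegree * k + 1) ^ R.natDegree := by
      rw [normalizedFactors_pow, Multiset.card_nsmul, mul_comm]
      gcongr
      exact Nat.le_add_left _ _

theorem sum_natDegree_primeFactors_le (f : F[X]) :
    ∑ Q ∈ primeFactors f, Q.natDegree ≤ f.natDegree := by
  rw [← natDegree_prod _ _ fun Q hQ ↦
    ne_zero_of_mem_normalizedFactors (mem_primeFactors.1 hQ)]
  exact natDegree_radical_le

/-- The monic irreducible polynomials of degree `d` over a finite field, as factors of
`X ^ (q ^ d) - X`. -/
noncomputable def monicIrreducibles (F : Type*) [Field F] [DecidableEq F] (d : ℕ) : Finset F[X] :=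
  (primeFactors (X ^ Nat.card F ^ d - X : F[X])).filter fun Q ↦ Q.natDegree = d

variable [Finite F] {d : ℕ}

theorem mem_monicIrreducibles (hd : d ≠ 0) {Q : F[X]} :
    Q ∈ monicIrreducibles F d ↔ Irreducible Q ∧ Q.Monic ∧ Q.natDegree = d := by
  rw [monicIrreducibles, Finset.mem_filter, mem_primeFactors, Polynomial.mem_normalizedFactors_iff
    (FiniteField.X_pow_card_pow_sub_X_ne_zero F hd Finite.one_lt_card), and_assoc, and_assoc]
  refine and_congr_right fun hirr ↦ and_congr_right fun _ ↦ and_iff_right_of_imp ?_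
  rintro rfl
  exact hirr.natDegree_dvd_iff_dvd_X_pow_card_pow_sub_X.1 dvd_rfl

theorem card_monicIrreducibles_mul_le (hd : d ≠ 0) :
    (monicIrreducibles F d).card * d ≤ Nat.card F ^ d := by
  have hq : 1 < Nat.card F := Finite.one_lt_card
  calc (monicIrreducibles F d).card * d
    _ = ∑ Q ∈ monicIrreducibles F d, Q.natDegree :=
      (Finset.sum_const_nat fun Q hQ ↦ (Finset.mem_filter.1 hQ).2).symm
    _ ≤ ∑ Q ∈ primeFactors (X ^ Nat.card F ^ d - X : F[X]), Q.natDegree :=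
      Finset.sum_le_sum_of_subset (Finset.filter_subset _ _)
    _ ≤ (X ^ Nat.card F ^ d - X : F[X]).natDegree :=
      sum_natDegree_primeFactors_le _
    _ = Nat.card F ^ d := FiniteField.X_pow_card_pow_sub_X_natDegree_eq F hd hq

end Factors

section Counting

theorem ncard_mem_orbit_and_smul_eq_le {G Ω : Type*} [Group G] [Finite G] [MulAction G Ω]
    (ω₀ : Ω) (T : Ω → Ω) :
    {p : G × Ω | p.2 ∈ MulAction.orbit G ω₀ ∧ p.1 • p.2 = T p.2}.ncard ≤ Nat.card G := by
  choose! t ht using fun (ω : Ω) (hω : ω ∈ MulAction.orbit G ω₀) ↦ MulAction.mem_orbit_iff.1 hω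
  let code (p : G × Ω) : G := t p.2 * (t (T p.2))⁻¹ * p.1 * t p.2
  have hcode {p : G × Ω} (hp : p.2 ∈ MulAction.orbit G ω₀ ∧ p.1 • p.2 = T p.2) :
      code p • ω₀ = p.2 := by
    have hT : T p.2 ∈ MulAction.orbit G ω₀ := by
      rw [← hp.2, ← MulAction.orbit_eq_iff, MulAction.orbit_smul, MulAction.orbit_eq_iff]
      exact hp.1
    rw [mul_smul, mul_smul, mul_smul, ht _ hp.1, hp.2, inv_smul_eq_iff.2 (ht _ hT).symm, ht _ hp.1]
  rw [← Set.ncard_univ]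
  refine Set.ncard_le_ncard_of_injOn code (fun _ _ ↦ Set.mem_univ _) ?_
  rintro ⟨g, ω⟩ hp ⟨g', ω'⟩ hp' heq
  obtain rfl : ω = ω' := (hcode hp).symm.trans ((congr_arg (· • ω₀) heq).trans (hcode hp'))
  simpa [code] using heq

theorem ncard_mul_le_ncard_of_le_ncard_fiber {α β : Type*} [Finite α] [Finite β] {A : Set α}
    {P : Set (α × β)} {n : ℕ} (h : ∀ a ∈ A, n ≤ {b | (a, b) ∈ P}.ncard) :
    A.ncard * n ≤ P.ncard := by
  classical
  have := Fintype.ofFinite A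
  let pairOf (s : Σ a : A, {b | (a.1, b) ∈ P}) : P := ⟨(s.1.1, s.2.1), s.2.2⟩
  have hinj : Function.Injective pairOf := by
    rintro ⟨⟨a, _⟩, b, _⟩ ⟨⟨a', _⟩, b', _⟩ heq
    obtain ⟨rfl, rfl⟩ := Prod.ext_iff.1 (congr_arg Subtype.val heq)
    rfl
  calc A.ncard * n
    _ = ∑ _ : A, n := by
      rw [Finset.sum_const, Finset.card_univ, smul_eq_mul, ← Nat.card_eq_fintype_card,
        Nat.card_coe_set_eq]
    _ ≤ ∑ a : A, Nat.card {b | (a.1, b) ∈ P} := Finset.sum_le_sum fun a _ ↦ h a a.2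
    _ = Nat.card (Σ a : A, {b | (a.1, b) ∈ P}) := Nat.card_sigma.symm
    _ ≤ P.ncard := Nat.card_le_card_of_injective pairOf hinj

variable {G F V : Type*} [Group G] [Field F] [AddCommGroup V] [Module F V]

theorem aeval_apply_eq_sum_modByMonic {x : End F V} {v : V} {e : F[X]} (he : e.Monic)
    (hv : aeval x e v = 0) (a : F[X]) :
    aeval x a v = ∑ j : Fin e.natDegree, (a %ₘ e).coeff j • (x ^ (j : ℕ)) v := by
  calc aeval x a v
    _ = aeval x (a %ₘ e) v := by
      conv_lhs => rw [← modByMonic_add_div a e]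
      rw [map_add, LinearMap.add_apply, aeval_apply_eq_zero_of_dvd (dvd_mul_right _ _) hv, add_zero]
    _ = ∑ j : Fin e.natDegree, (a %ₘ e).coeff j • (x ^ (j : ℕ)) v := by
      conv_lhs => rw [← sum_modByMonic_coeff (p := a) he degree_le_natDegree]
      simp [LinearMap.sum_apply, aeval_monomial, ← Algebra.smul_def]

variable [DistribMulAction G V] [SMulCommClass G F V]

theorem toModuleEnd_pow_apply (g : G) (i : ℕ) (v : V) :
    (toModuleEnd F V g ^ i) v = g ^ i • v := by
  rw [← map_pow]
  rfl

variable (G V) in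
/-- The pairs `(g, v)` for which `v` has minimal polynomial `e` under `g`. -/
def vectorMinpolyPairs (e : F[X]) : Set (G × V) :=
  {p | vectorMinpoly (toModuleEnd F V p.1) p.2 = e}

/-- A pair `(g, v)` is recovered from `g` and the tuple `τ = (v, g v, …, g ^ (d - 1) v)`, where
`d = deg e`; `e` writes every `g ^ i v`, and so the tuple `g τ`, in terms of `τ`. -/
theorem ncard_vectorMinpolyPairs_le [Finite G] [Finite V] {e : F[X]} (he : e.Monic)
    (hG : ∀ τ τ' : Fin e.natDegree → V, LinearIndependent F τ → LinearIndependent F τ' →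
      τ' ∈ MulAction.orbit G τ) :
    (vectorMinpolyPairs G V e).ncard ≤ Nat.card G := by
  rcases (vectorMinpolyPairs G V e).eq_empty_or_nonempty with hempty | ⟨p₀, hp₀⟩
  · simp [hempty]
  let tuple (p : G × V) (i : Fin e.natDegree) : V := (p.1 ^ (i : ℕ)) • p.2
  let combine (τ : Fin e.natDegree → V) (a : F[X]) : V :=
    ∑ j : Fin e.natDegree, (a %ₘ e).coeff j • τ j
  have hcombine {p : G × V} (hp : p ∈ vectorMinpolyPairs G V e) (i : ℕ) :
      p.1 ^ i • p.2 = combine (tuple p) (X ^ i) := by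
    have := aeval_apply_eq_sum_modByMonic he (vectorMinpoly_dvd_iff.1 hp.dvd) (X ^ i)
    simpa only [map_pow, aeval_X, toModuleEnd_pow_apply] using this
  have hli {p : G × V} (hp : p ∈ vectorMinpolyPairs G V e) : LinearIndependent F (tuple p) := by
    have := linearIndependent_pow_apply (toModuleEnd F V p.1) p.2
    rw [hp] at this
    simpa only [toModuleEnd_pow_apply] using this
  refine (Set.ncard_le_ncard_of_injOn (fun p ↦ (p.1, tuple p)) ?_ ?_ ?_).trans
    (ncard_mem_orbit_and_smul_eq_le (G := G) (tuple p₀) fun τ i ↦ combine τ (X ^ (i + 1 : ℕ)))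
  · refine fun p hp ↦ ⟨hG _ _ (hli hp₀) (hli hp), funext fun i ↦ ?_⟩
    rw [← hcombine hp, pow_succ', mul_smul]
    rfl
  · rintro ⟨g, v⟩ hp ⟨g', v'⟩ hp' heq
    obtain ⟨rfl, htuple⟩ := Prod.ext_iff.1 heq
    have hv := hcombine hp 0
    simp only at htuple hv
    rw [htuple, ← hcombine hp'] at hv
    simpa using hv
  · exact Set.toFinite _

variable (G V) in
/-- The elements `g` for which the kernel of `f(g)` has dimension at least `j`. -/
def largeKernel (f : F[X]) (j : ℕ) : Set G :=
  {g | j ≤ finrank F (LinearMap.ker (aeval (toModuleEnd F V g) f))}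

theorem ncard_largeKernel_mul_le [DecidableEq F] [Finite F] [FiniteDimensional F V] [Finite G]
    {f : F[X]} (hf : f ≠ 0) {N : ℕ}
    (hN : ∀ e : F[X], e.Monic → e ∣ f → (vectorMinpolyPairs G V e).ncard ≤ N) (j : ℕ) :
    (largeKernel G V f j).ncard * Nat.card F ^ j ≤ (monicDivisors f).card * N := by
  have : Finite V := Module.finite_of_finite F
  let pairs : Set (G × V) := {p | aeval (toModuleEnd F V p.1) f p.2 = 0}
  calc (largeKernel G V f j).ncard * Nat.card F ^ j
    _ ≤ pairs.ncard := by
      refine ncard_mul_le_ncard_of_le_ncard_fiber fun g hg ↦ ?_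
      refine (Nat.pow_le_pow_right Finite.card_pos hg).trans_eq ?_
      rw [← Module.natCard_eq_pow_finrank]
      rfl
    _ ≤ (⋃ e ∈ monicDivisors f, vectorMinpolyPairs G V e).ncard := by
      refine Set.ncard_le_ncard fun p hp ↦ Set.mem_biUnion (x := vectorMinpoly _ p.2) ?_ rfl
      exact (mem_monicDivisors hf).2 ⟨monic_vectorMinpoly hf hp, vectorMinpoly_dvd_iff.2 hp⟩
    _ ≤ ∑ e ∈ monicDivisors f, (vectorMinpolyPairs G V e).ncard := Finset.set_ncard_biUnion_le _ _
    _ ≤ (monicDivisors f).card * N := by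
      refine Finset.sum_le_card_nsmul _ _ _ fun e he ↦ ?_
      obtain ⟨hmonic, hdvd⟩ := (mem_monicDivisors hf).1 he
      exact hN e hmonic hdvd

end Counting

section SpecialLinearGroup

variable {F V : Type*} [Field F] [AddCommGroup V] [Module F V]

theorem exists_linearEquiv_apply_eq {ι : Type*} [Finite ι] {τ τ' : ι → V}
    (h : LinearIndependent F τ) (h' : LinearIndependent F τ') :
    ∃ φ : V ≃ₗ[F] V, ∀ i, φ (τ i) = τ' i := by
  have : FiniteDimensional F (Submodule.span F (Set.range τ)) :=
    .span_of_finite F (Set.finite_range τ)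
  obtain ⟨φ, hφ⟩ := Submodule.exists_linearEquiv_restrict_eq
    ((Basis.span h).equiv (Basis.span h') (Equiv.refl ι))
  refine ⟨φ, fun i ↦ ?_⟩
  have hi := hφ (Basis.span h i)
  rw [Basis.equiv_apply, Basis.span_apply, Basis.span_apply] at hi
  exact hi.symm

theorem natCard_linearEquiv_le [Finite F] :
    Nat.card (V ≃ₗ[F] V) ≤ Nat.card F * Nat.card (SpecialLinearGroup F V) := by
  have hker : Nat.card (LinearEquiv.det (R := F) (M := V)).ker =
      Nat.card (SpecialLinearGroup F V) :=
    Nat.card_congr (Equiv.subtypeEquivRight fun _ ↦ MonoidHom.mem_ker)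
  rw [← (LinearEquiv.det (R := F) (M := V)).ker.card_mul_index, Subgroup.index_ker, hker, mul_comm]
  gcongr
  exact (Subgroup.card_le_card_group _).trans
    (Nat.card_le_card_of_injective Units.val Units.val_injective)

variable (F V) in
theorem finite_specialLinearGroup [Finite V] : Finite (SpecialLinearGroup F V) :=
  have : Finite (V ≃ₗ[F] V) := DFunLike.finite _
  Subtype.finite

variable [FiniteDimensional F V]

theorem exists_linearEquiv_det_eq {U : Submodule F V} (hU : U < ⊤) (c : Fˣ) :
    ∃ ψ : V ≃ₗ[F] V, (∀ u ∈ U, ψ u = u) ∧ LinearEquiv.det ψ = c := by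
  obtain ⟨f, hf0, hf⟩ := Submodule.exists_le_ker_of_lt_top U hU
  obtain ⟨u, hu⟩ := LinearMap.surjective hf0 (c - 1)
  have hc : 1 + f u = c := by rw [hu, add_sub_cancel]
  refine ⟨LinearEquiv.dilatransvection (hc ▸ c.isUnit), fun w hw ↦ ?_, Units.ext ?_⟩
  · rw [LinearEquiv.dilatransvection.apply, LinearMap.mem_ker.1 (hf hw), zero_smul, add_zero]
  · rw [LinearEquiv.coe_det, LinearEquiv.dilatransvection.coe_toLinearMap,
      LinearMap.transvection.det, hc]

theorem mem_orbit_specialLinearGroup {ι : Type*} [Fintype ι] (hι : Fintype.card ι < finrank F V)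
    {τ τ' : ι → V} (h : LinearIndependent F τ) (h' : LinearIndependent F τ') :
    τ' ∈ MulAction.orbit (SpecialLinearGroup F V) τ := by
  obtain ⟨φ, hφ⟩ := exists_linearEquiv_apply_eq h h'
  have hU : Submodule.span F (Set.range τ') < ⊤ := by
    refine lt_top_iff_ne_top.2 fun htop ↦ hι.ne ?_
    rw [← finrank_top F V, ← htop, finrank_span_eq_card h']
  obtain ⟨ψ, hψ, hdet⟩ := exists_linearEquiv_det_eq hU (LinearEquiv.det φ)⁻¹
  refine ⟨⟨ψ * φ, by rw [map_mul, hdet, inv_mul_cancel]⟩, funext fun i ↦ ?_⟩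
  change ψ (φ (τ i)) = τ' i
  rw [hφ, hψ _ (Submodule.subset_span ⟨i, rfl⟩)]

variable [Finite F]

theorem ncard_vectorMinpolyPairs_specialLinearGroup_le_of_lt {e : F[X]} (he : e.Monic)
    (hlt : e.natDegree < finrank F V) :
    (vectorMinpolyPairs (SpecialLinearGroup F V) V e).ncard ≤
      Nat.card (SpecialLinearGroup F V) := by
  have : Finite V := Module.finite_of_finite F
  have := finite_specialLinearGroup F V
  exact ncard_vectorMinpolyPairs_le he fun τ τ' h h' ↦
    mem_orbit_specialLinearGroup (by rwa [Fintype.card_fin]) h h'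

theorem ncard_vectorMinpolyPairs_specialLinearGroup_le {e : F[X]} (he : e.Monic) :
    (vectorMinpolyPairs (SpecialLinearGroup F V) V e).ncard ≤
      Nat.card F * Nat.card (SpecialLinearGroup F V) := by
  have : Finite V := Module.finite_of_finite F
  have : Finite (V ≃ₗ[F] V) := DFunLike.finite _
  refine le_trans ?_ natCard_linearEquiv_le
  calc (vectorMinpolyPairs (SpecialLinearGroup F V) V e).ncard
    _ ≤ (vectorMinpolyPairs (V ≃ₗ[F] V) V e).ncard :=
      Set.ncard_le_ncard_of_injOn (Prod.map SpecialLinearGroup.toLinearEquiv id)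
        (fun _ hp ↦ hp)
        (SpecialLinearGroup.toLinearEquiv_injective.prodMap Function.injective_id).injOn
    _ ≤ Nat.card (V ≃ₗ[F] V) := ncard_vectorMinpolyPairs_le he fun τ τ' h h' ↦
      have ⟨φ, hφ⟩ := exists_linearEquiv_apply_eq h h'
      ⟨φ, funext hφ⟩

variable {Q : F[X]} {m : ℕ}

theorem ncard_largeKernel_comp_X_pow_mul_le (hQ : Irreducible Q) (hm : 0 < m) (k j : ℕ) :
    (largeKernel (SpecialLinearGroup F V) V (Q.comp (X ^ m) ^ k) j).ncard * Nat.card F ^ j ≤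
      (m * k + 1) ^ m * (Nat.card F * Nat.card (SpecialLinearGroup F V)) := by
  classical
  have : Finite V := Module.finite_of_finite F
  have := finite_specialLinearGroup F V
  have hdeg : 0 < (X ^ m : F[X]).natDegree := by rwa [natDegree_X_pow]
  refine (ncard_largeKernel_mul_le
    (pow_ne_zero k (comp_ne_zero_of_natDegree_pos hQ.natDegree_pos hdeg))
    (fun e he _ ↦ ncard_vectorMinpolyPairs_specialLinearGroup_le he) j).trans ?_
  gcongr
  simpa only [natDegree_X_pow] using card_monicDivisors_comp_pow_le hQ hdeg k

theorem ncard_largeKernel_comp_X_pow_mul_le_of_lt (hQ : Irreducible Q) (hm : 0 < m)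
    (hlt : m * Q.natDegree < finrank F V) (j : ℕ) :
    (largeKernel (SpecialLinearGroup F V) V (Q.comp (X ^ m)) j).ncard * Nat.card F ^ j ≤
      (m + 1) ^ m * Nat.card (SpecialLinearGroup F V) := by
  classical
  have : Finite V := Module.finite_of_finite F
  have := finite_specialLinearGroup F V
  have hdeg : 0 < (X ^ m : F[X]).natDegree := by rwa [natDegree_X_pow]
  have hf := comp_ne_zero_of_natDegree_pos hQ.natDegree_pos hdeg
  refine (ncard_largeKernel_mul_le hf (fun e he hdvd ↦
    ncard_vectorMinpolyPairs_specialLinearGroup_le_of_lt he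
      ((natDegree_le_of_dvd hdvd hf).trans_lt ?_)) j).trans ?_
  · rwa [natDegree_comp, natDegree_X_pow, mul_comm]
  · gcongr
    simpa only [natDegree_X_pow, pow_one, mul_one] using card_monicDivisors_comp_pow_le hQ hdeg 1

end SpecialLinearGroup

section PowerKernels

variable {F V : Type*} [Field F] [AddCommGroup V] [Module F V]

theorem aeval_comp_X_pow_pow (x : End F V) (Q : F[X]) (m k : ℕ) :
    aeval x (Q.comp (X ^ m) ^ k) = aeval (x ^ m) (Q ^ k) := by
  rw [map_pow, aeval_comp, map_pow, map_pow, aeval_X]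

variable [FiniteDimensional F V]

theorem natDegree_le_finrank_ker {y : End F V} {Q : F[X]} (hQ : Irreducible Q)
    (hdvd : Q ∣ minpoly F y) : Q.natDegree ≤ finrank F (LinearMap.ker (aeval y Q)) := by
  obtain ⟨c, hc⟩ := hdvd
  have hc0 : c ≠ 0 := by
    rintro rfl
    exact minpoly.ne_zero (IsIntegral.of_finite F y) (hc.trans (mul_zero Q))
  have hcy : aeval y c ≠ 0 := fun h ↦ hQ.not_isUnit <| isUnit_of_dvd_one <|
    (mul_dvd_mul_iff_right hc0).1 (by rw [← hc, one_mul]; exact minpoly.dvd F y h)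
  obtain ⟨w, hw⟩ := not_forall.1 (mt LinearMap.ext hcy)
  have hv : aeval y Q (aeval y c w) = 0 := by
    rw [← aeval_mul_apply, ← hc, minpoly.aeval, LinearMap.zero_apply]
  have hunit : ¬ IsUnit (vectorMinpoly y (aeval y c w)) := fun h ↦ hw <| by
    have h1 := vectorMinpoly_dvd_iff.1 (h.dvd (a := 1))
    rwa [map_one] at h1
  have hassoc := (hQ.dvd_iff.1 (vectorMinpoly_dvd_iff.2 hv)).resolve_left hunit
  exact (natDegree_eq_of_degree_eq (degree_eq_degree_of_associated hassoc)).trans_le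
    (natDegree_vectorMinpoly_le_finrank_ker hv)

theorem mem_largeKernel_of_dvd_minpoly {G : Type*} [Group G] [DistribMulAction G V]
    [SMulCommClass G F V] {m : ℕ} {g : G} {Q : F[X]} (hQ : Irreducible Q)
    (hdvd : Q ∣ minpoly F (toModuleEnd F V g ^ m)) :
    g ∈ largeKernel G V (Q.comp (X ^ m)) Q.natDegree := by
  have hle := natDegree_le_finrank_ker hQ hdvd
  rwa [← pow_one Q, ← aeval_comp_X_pow_pow, pow_one, pow_one] at hle

variable [DecidableEq F]

/-- The monic irreducible factors of the minimal polynomial of `x ^ m` of degree less than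
`dim V / m`. -/
noncomputable def smallFactors (m : ℕ) (x : End F V) : Finset F[X] :=
  {Q ∈ primeFactors (minpoly F (x ^ m)) | m * Q.natDegree < finrank F V}

theorem mem_smallFactors {m : ℕ} {x : End F V} {Q : F[X]} : Q ∈ smallFactors m x ↔
    (Irreducible Q ∧ Q.Monic ∧ Q ∣ minpoly F (x ^ m)) ∧ m * Q.natDegree < finrank F V := by
  rw [smallFactors, Finset.mem_filter, mem_primeFactors_minpoly_iff]

theorem card_primeFactors_le_card_smallFactors_add [Nontrivial V] (m : ℕ) (x : End F V) :
    (primeFactors (minpoly F (x ^ m))).card ≤ (smallFactors m x).card + m := by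
  rw [← Finset.card_filter_add_card_filter_not (fun Q : F[X] ↦ m * Q.natDegree < finrank F V)]
  refine Nat.add_le_add_left (Nat.le_of_mul_le_mul_right ?_ (finrank_pos (R := F) (M := V))) _
  calc _
    _ ≤ ∑ Q ∈ primeFactors (minpoly F (x ^ m)) with ¬ m * Q.natDegree < finrank F V,
        m * Q.natDegree :=
      Finset.card_nsmul_le_sum _ _ _ fun Q hQ ↦ not_lt.1 (Finset.mem_filter.1 hQ).2
    _ ≤ ∑ Q ∈ primeFactors (minpoly F (x ^ m)), m * Q.natDegree :=
      Finset.sum_le_sum_of_subset (Finset.filter_subset _ _)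
    _ ≤ m * finrank F V := by
      rw [← Finset.mul_sum, ← LinearMap.charpoly_natDegree (x ^ m)]
      gcongr
      exact (sum_natDegree_primeFactors_le _).trans (natDegree_le_of_dvd
        (LinearMap.minpoly_dvd_charpoly _) (LinearMap.charpoly_monic _).ne_zero)

end PowerKernels

section ExceptionalSets

variable {F V : Type*} [Field F] [Finite F] [AddCommGroup V] [Module F V]
  [FiniteDimensional F V] {m : ℕ}

variable (F V) in
/-- The `x` for which some monic irreducible `Q` of degree greater than `D` satisfies
`k * deg Q ≤ dim ker (Q(x ^ m) ^ k)`. -/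
def fullKernel (m k D : ℕ) : Set (SpecialLinearGroup F V) :=
  {x | ∃ Q : F[X], Q.Monic ∧ Irreducible Q ∧ D < Q.natDegree ∧
    x ∈ largeKernel (SpecialLinearGroup F V) V (Q.comp (X ^ m) ^ k) (k * Q.natDegree)}

theorem ncard_biUnion_largeKernel_mul_pow_le [DecidableEq F] (hm : 0 < m) (k : ℕ) {d : ℕ}
    (hd : d ≠ 0) :
    (⋃ Q ∈ monicIrreducibles F d, largeKernel (SpecialLinearGroup F V) V
      (Q.comp (X ^ m) ^ k) (k * d)).ncard * Nat.card F ^ (k * d) ≤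
        Nat.card F ^ (d + 1) * ((m * k + 1) ^ m * Nat.card (SpecialLinearGroup F V)) := by
  set q := Nat.card F
  set M := (m * k + 1) ^ m * Nat.card (SpecialLinearGroup F V) with hM
  calc _
    _ ≤ (∑ Q ∈ monicIrreducibles F d, (largeKernel (SpecialLinearGroup F V) V
          (Q.comp (X ^ m) ^ k) (k * d)).ncard) * q ^ (k * d) := by
      gcongr
      exact Finset.set_ncard_biUnion_le _ _
    _ ≤ (monicIrreducibles F d).card * (q * M) := by
      rw [Finset.sum_mul]
      refine Finset.sum_le_card_nsmul _ _ _ fun Q hQ ↦ ?_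
      rw [hM, mul_left_comm]
      exact ncard_largeKernel_comp_X_pow_mul_le ((mem_monicIrreducibles hd).1 hQ).1 hm _ _
    _ ≤ q ^ d * (q * M) := by
      gcongr
      exact (Nat.le_mul_of_pos_right _ hd.pos).trans (card_monicIrreducibles_mul_le hd)
    _ = q ^ (d + 1) * M := by rw [pow_succ, mul_assoc]

theorem ncard_biUnion_largeKernel_mul_le [DecidableEq F] (hm : 0 < m) (j : ℕ) {d : ℕ}
    (hd : d ≠ 0) :
    (⋃ Q ∈ monicIrreducibles F d, largeKernel (SpecialLinearGroup F V) V
      (Q.comp (X ^ m) ^ (j + 2)) ((j + 2) * d)).ncard * 2 ^ (j + d) ≤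
        2 * (m * (j + 2) + 1) ^ m * Nat.card (SpecialLinearGroup F V) := by
  obtain ⟨c, rfl⟩ := Nat.exists_eq_succ_of_ne_zero hd
  set q := Nat.card F
  have hq : 2 ≤ q := Finite.one_lt_card
  set B := ⋃ Q ∈ monicIrreducibles F (c + 1), largeKernel (SpecialLinearGroup F V) V
    (Q.comp (X ^ m) ^ (j + 2)) ((j + 2) * (c + 1))
  set M := (m * (j + 2) + 1) ^ m * Nat.card (SpecialLinearGroup F V)
  have hcancel : B.ncard * q ^ (j + c + j * c) ≤ M := by
    refine Nat.le_of_mul_le_mul_left ?_ (show 0 < q ^ (c + 2) by positivity)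
    calc _ = B.ncard * q ^ ((j + 2) * (c + 1)) := by ring
      _ ≤ q ^ (c + 2) * M := ncard_biUnion_largeKernel_mul_pow_le hm (j + 2) hd
  calc B.ncard * 2 ^ (j + (c + 1))
    _ = 2 * (B.ncard * 2 ^ (j + c)) := by ring
    _ ≤ 2 * (B.ncard * q ^ (j + c + j * c)) := by
      gcongr 2 * (B.ncard * ?_)
      exact (Nat.pow_le_pow_left hq _).trans
        (Nat.pow_le_pow_right (by omega) (Nat.le_add_right _ _))
    _ ≤ _ := by
      rw [mul_assoc]
      gcongr

theorem fullKernel_subset_biUnion [DecidableEq F] {k : ℕ} (hk : 0 < k) (m D : ℕ) :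
    fullKernel F V m k D ⊆ ⋃ d ∈ Finset.Ico (D + 1) (finrank F V + 1),
      ⋃ Q ∈ monicIrreducibles F d,
        largeKernel (SpecialLinearGroup F V) V (Q.comp (X ^ m) ^ k) (k * d) := by
  rintro x ⟨Q, hmonic, hirr, hD, hx⟩
  simp only [Set.mem_iUnion]
  refine ⟨Q.natDegree, Finset.mem_Ico.2 ⟨hD, Nat.lt_succ_of_le ?_⟩, Q,
    (mem_monicIrreducibles hirr.natDegree_pos.ne').2 ⟨hirr, hmonic, rfl⟩, hx⟩
  exact (Nat.le_mul_of_pos_left _ hk).trans (le_trans hx (Submodule.finrank_le _))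

theorem ncard_fullKernel_le (hm : 0 < m) (j D : ℕ) :
    ((fullKernel F V m (j + 2) D).ncard : ℝ) ≤
      2 * (m * (j + 2) + 1) ^ m * (1 / 2) ^ (j + D) * Nat.card (SpecialLinearGroup F V) := by
  classical
  have : Finite V := Module.finite_of_finite F
  have := finite_specialLinearGroup F V
  set n := finrank F V
  set M : ℝ := 2 * (m * (j + 2) + 1) ^ m * Nat.card (SpecialLinearGroup F V) with hM
  let B (d : ℕ) := ⋃ Q ∈ monicIrreducibles F d,
    largeKernel (SpecialLinearGroup F V) V (Q.comp (X ^ m) ^ (j + 2)) ((j + 2) * d)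
  have hB (d : ℕ) (hd : d ∈ Finset.Ico (D + 1) (n + 1)) :
      ((B d).ncard : ℝ) ≤ M * (1 / 2) ^ j * (1 / 2) ^ d := by
    rw [mul_assoc, ← pow_add, one_div_pow, mul_one_div, le_div_iff₀ (by positivity)]
    have hd0 : d ≠ 0 := by grind
    rw [hM]
    exact_mod_cast ncard_biUnion_largeKernel_mul_le (V := V) hm j hd0
  calc ((fullKernel F V m (j + 2) D).ncard : ℝ)
    _ ≤ ∑ d ∈ Finset.Ico (D + 1) (n + 1), ((B d).ncard : ℝ) := by
      exact_mod_cast (Set.ncard_le_ncard (fullKernel_subset_biUnion (by omega) m D)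
        (Set.toFinite _)).trans (Finset.set_ncard_biUnion_le _ _)
    _ ≤ ∑ d ∈ Finset.Ico (D + 1) (n + 1), M * (1 / 2) ^ j * (1 / 2) ^ d := Finset.sum_le_sum hB
    _ ≤ M * (1 / 2) ^ j * ((1 / 2) ^ (D + 1) / (1 - 1 / 2)) := by
      rw [← Finset.mul_sum]
      gcongr
      exact geom_sum_Ico_le_of_lt_one (by norm_num) (by norm_num)
    _ = _ := by rw [hM]; ring

theorem sum_card_filter_mem_eq_sum_ncard {α β : Type*} [Fintype α] (s : Finset β) (K : β → Set α)
    [∀ a, DecidablePred (a ∈ K ·)] : ∑ a, {b ∈ s | a ∈ K b}.card = ∑ b ∈ s, (K b).ncard := by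
  classical
  calc ∑ a, {b ∈ s | a ∈ K b}.card
    _ = ∑ b ∈ s, {a | a ∈ K b}.toFinset.card := by
      simp only [Finset.card_filter, Set.toFinset_card, Fintype.card_subtype]
      exact Finset.sum_comm
    _ = ∑ b ∈ s, (K b).ncard := Finset.sum_congr rfl fun b _ ↦
      (Set.ncard_eq_toFinset_card' _).symm

variable [DecidableEq F]

theorem sum_card_smallFactors_natDegree_eq_mul_le [Fintype (SpecialLinearGroup F V)] (hm : 0 < m)
    {d : ℕ} (hd : d ≠ 0) :
    (∑ x : SpecialLinearGroup F V,
      {Q ∈ smallFactors m (toModuleEnd F V x) | Q.natDegree = d}.card) * d ≤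
        (m + 1) ^ m * Nat.card (SpecialLinearGroup F V) := by
  classical
  rcases le_or_gt (finrank F V) (m * d) with hle | hlt
  · rw [Finset.sum_eq_zero fun x _ ↦ ?_, zero_mul]
    · exact Nat.zero_le _
    · refine Finset.card_eq_zero.2 (Finset.filter_eq_empty_iff.2 ?_)
      rintro Q hQ rfl
      exact hle.not_gt (mem_smallFactors.1 hQ).2
  set q := Nat.card F
  set M := (m + 1) ^ m * Nat.card (SpecialLinearGroup F V)
  let K (Q : F[X]) := largeKernel (SpecialLinearGroup F V) V (Q.comp (X ^ m)) d
  have hsub (x : SpecialLinearGroup F V) :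
      {Q ∈ smallFactors m (toModuleEnd F V x) | Q.natDegree = d} ⊆
        {Q ∈ monicIrreducibles F d | x ∈ K Q} := by
    intro Q hQ
    obtain ⟨hsmall, rfl⟩ := Finset.mem_filter.1 hQ
    obtain ⟨⟨hirr, hmonic, hdvd⟩, -⟩ := mem_smallFactors.1 hsmall
    exact Finset.mem_filter.2 ⟨(mem_monicIrreducibles hd).2 ⟨hirr, hmonic, rfl⟩,
      mem_largeKernel_of_dvd_minpoly hirr hdvd⟩
  refine Nat.le_of_mul_le_mul_right ?_ (show 0 < q ^ d from pow_pos Finite.card_pos d)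
  calc _
    _ ≤ (∑ x, {Q ∈ monicIrreducibles F d | x ∈ K Q}.card) * d * q ^ d := by
      gcongr
      exact hsub _
    _ = (∑ Q ∈ monicIrreducibles F d, (K Q).ncard * q ^ d) * d := by
      rw [sum_card_filter_mem_eq_sum_ncard, ← Finset.sum_mul, mul_right_comm]
    _ ≤ (monicIrreducibles F d).card * M * d := by
      gcongr
      refine Finset.sum_le_card_nsmul _ _ _ fun Q hQ ↦ ?_
      obtain ⟨hirr, -, rfl⟩ := (mem_monicIrreducibles hd).1 hQ
      exact ncard_largeKernel_comp_X_pow_mul_le_of_lt hirr hm hlt _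
    _ ≤ M * q ^ d := by
      rw [mul_right_comm, mul_comm]
      gcongr
      exact card_monicIrreducibles_mul_le hd

theorem sum_card_smallFactors_le [Fintype (SpecialLinearGroup F V)] (hm : 0 < m) :
    ∑ x : SpecialLinearGroup F V, ((smallFactors m (toModuleEnd F V x)).card : ℝ) ≤
      (m + 1) ^ m * (1 + Real.log (finrank F V)) * Nat.card (SpecialLinearGroup F V) := by
  set n := finrank F V
  set T := Nat.card (SpecialLinearGroup F V)
  have hdeg (x : SpecialLinearGroup F V) (Q : F[X])
      (hQ : Q ∈ smallFactors m (toModuleEnd F V x)) : Q.natDegree ∈ Finset.Icc 1 n := by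
    obtain ⟨⟨hirr, -, hdvd⟩, -⟩ := mem_smallFactors.1 hQ
    exact Finset.mem_Icc.2 ⟨hirr.natDegree_pos,
      (natDegree_le_finrank_ker hirr hdvd).trans (Submodule.finrank_le _)⟩
  calc ∑ x, ((smallFactors m (toModuleEnd F V x)).card : ℝ)
    _ = ∑ x, ∑ d ∈ Finset.Icc 1 n,
        ({Q ∈ smallFactors m (toModuleEnd F V x) | Q.natDegree = d}.card : ℝ) :=
      Finset.sum_congr rfl fun x _ ↦ by
        exact_mod_cast Finset.card_eq_sum_card_fiberwise (hdeg x)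
    _ = ∑ d ∈ Finset.Icc 1 n, ∑ x,
        ({Q ∈ smallFactors m (toModuleEnd F V x) | Q.natDegree = d}.card : ℝ) := Finset.sum_comm
    _ ≤ ∑ d ∈ Finset.Icc 1 n, (m + 1) ^ m * T * (d : ℝ)⁻¹ := by
      refine Finset.sum_le_sum fun d hd ↦ ?_
      have hd0 : 0 < d := (Finset.mem_Icc.1 hd).1
      rw [← div_eq_mul_inv, le_div_iff₀ (by positivity)]
      exact_mod_cast sum_card_smallFactors_natDegree_eq_mul_le hm hd0.ne'
    _ = (m + 1) ^ m * T * (harmonic n : ℝ) := by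
      rw [← Finset.mul_sum, harmonic_eq_sum_Icc]
      push_cast
      rfl
    _ ≤ (m + 1) ^ m * T * (1 + Real.log n) := by
      gcongr
      exact harmonic_le_one_add_log n
    _ = _ := by ring

variable (F V) in
/-- The `x` for which more than `R` irreducible factors of the minimal polynomial of `x ^ m` are
small. -/
def manyFactors (m : ℕ) (R : ℝ) : Set (SpecialLinearGroup F V) :=
  {x | R < (smallFactors m (toModuleEnd F V x)).card}

theorem ncard_manyFactors_mul_le (hm : 0 < m) (R : ℝ) :
    (manyFactors F V m R).ncard * R ≤
      (m + 1) ^ m * (1 + Real.log (finrank F V)) * Nat.card (SpecialLinearGroup F V) := by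
  classical
  have : Finite V := Module.finite_of_finite F
  have := finite_specialLinearGroup F V
  have := Fintype.ofFinite (SpecialLinearGroup F V)
  refine le_trans ?_ (sum_card_smallFactors_le hm)
  have hlt (x : SpecialLinearGroup F V) (hx : x ∈ manyFactors F V m R) :
      R < (smallFactors m (toModuleEnd F V x)).card := hx
  rw [Set.ncard_eq_toFinset_card', ← nsmul_eq_mul]
  calc (manyFactors F V m R).toFinset.card • R
    _ ≤ ∑ x ∈ (manyFactors F V m R).toFinset, ((smallFactors m (toModuleEnd F V x)).card : ℝ) :=
      Finset.card_nsmul_le_sum _ _ _ fun x hx ↦ (hlt x (Set.mem_toFinset.1 hx)).le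
    _ ≤ _ := Finset.sum_le_sum_of_subset_of_nonneg (Finset.subset_univ _)
      fun x _ _ ↦ Nat.cast_nonneg _

theorem natCard_pow_eq_pow_le_rpow [Nontrivial V] {j D : ℕ} (hm : 0 < m) {R : ℝ}
    {x : SpecialLinearGroup F V} (hfull : x ∉ fullKernel F V m (j + 1) 0)
    (hfull' : x ∉ fullKernel F V m 2 D) (hmany : x ∉ manyFactors F V m R) :
    (Nat.card {h : End F V // h ^ m = toModuleEnd F V x ^ m} : ℝ) ≤
      (Nat.card F : ℝ) ^ ((m + ((j + 1) * D : ℝ) ^ 2) * (R + m)) := by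
  set y := toModuleEnd F V x
  have hcount := natCard_pow_eq_le (x := y ^ m) (k := j) (D := D) hm
    (fun Q hmonic hirr ↦ not_le.1 fun h ↦ hfull ⟨Q, hmonic, hirr, hirr.natDegree_pos, by
      rwa [← aeval_comp_X_pow_pow] at h⟩)
    (fun Q hmonic hirr hD ↦ not_le.1 fun h ↦ hfull' ⟨Q, hmonic, hirr, hD, by
      rwa [← aeval_comp_X_pow_pow] at h⟩)
  have hfactors : ((primeFactors (minpoly F (y ^ m))).card : ℝ) ≤ R + m := calc
    _ ≤ ((smallFactors m y).card : ℝ) + m := by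
      exact_mod_cast card_primeFactors_le_card_smallFactors_add m y
    _ ≤ R + m := by
      gcongr
      exact not_lt.1 hmany
  calc (Nat.card {h : End F V // h ^ m = y ^ m} : ℝ)
    _ ≤ (Nat.card F : ℝ) ^
        (((m + ((j + 1) * D) ^ 2) * (primeFactors (minpoly F (y ^ m))).card : ℕ) : ℝ) := by
      rw [Real.rpow_natCast, pow_mul]
      exact_mod_cast hcount
    _ ≤ _ := by
      push_cast
      gcongr
      exact_mod_cast Finite.card_pos (α := F)

end ExceptionalSets

section Assembly

theorem exists_two_mul_pow_mul_half_pow_le (m : ℕ) {δ : ℝ} (hδ : 0 < δ) :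
    ∃ j : ℕ, 2 * ((m : ℝ) * (j + 2) + 1) ^ m * (1 / 2) ^ j ≤ δ := by
  have hlim := (tendsto_pow_const_mul_const_pow_of_abs_lt_one m
    (r := (1 / 2 : ℝ)) (by norm_num [abs_of_pos])).const_mul (2 * (3 * m + 1 : ℝ) ^ m)
  rw [mul_zero] at hlim
  obtain ⟨j, hj, hj1⟩ := ((hlim.eventually_le_const hδ).and (Filter.eventually_ge_atTop 1)).exists
  have hbase : (m : ℝ) * (j + 2) + 1 ≤ (3 * m + 1) * j := by
    have : (1 : ℝ) ≤ j := by exact_mod_cast hj1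
    nlinarith [(Nat.cast_nonneg m : (0 : ℝ) ≤ m)]
  refine ⟨j, le_trans ?_ hj⟩
  calc 2 * ((m : ℝ) * (j + 2) + 1) ^ m * (1 / 2) ^ j
    _ ≤ 2 * ((3 * m + 1) * j) ^ m * (1 / 2) ^ j := by gcongr
    _ = 2 * (3 * m + 1) ^ m * (j ^ m * (1 / 2) ^ j) := by rw [mul_pow]; ring

theorem half_le_log_natCast {n : ℕ} (hn : 2 ≤ n) : 1 / 2 ≤ Real.log n := calc
  1 / 2 ≤ Real.log 2 := by linarith [Real.log_two_gt_d9]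
  _ ≤ Real.log n := Real.log_le_log two_pos (by exact_mod_cast hn)

theorem mul_add_lt_mul_log {C K M : ℝ} (hC : 0 ≤ C) (hK : 0 ≤ K) (hM : 0 ≤ M) {n : ℕ}
    (hn : 2 ≤ n) : C * (K * (1 + Real.log n) + M) < (C * (3 * K + 2 * M) + 1) * Real.log n := by
  have hL := half_le_log_natCast hn
  calc C * (K * (1 + Real.log n) + M)
    _ ≤ C * (K * (3 * Real.log n) + M * (2 * Real.log n)) := by
      gcongr
      · linarith
      · exact le_mul_of_one_le_right hM (by linarith)
    _ < (C * (3 * K + 2 * M) + 1) * Real.log n := by linarith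

theorem mul_log_le_mul_log_pow_four (l : ℝ) {n : ℕ} (hn : 2 ≤ n) :
    l * Real.log n ≤ 8 * |l| * Real.log n ^ 4 := by
  have hL := half_le_log_natCast hn
  have hcube : (1 / 2 : ℝ) ^ 3 ≤ Real.log n ^ 3 := by gcongr
  calc l * Real.log n
    _ ≤ |l| * Real.log n * 1 := by
      rw [mul_one]
      gcongr
      exact le_abs_self l
    _ ≤ |l| * Real.log n * (8 * Real.log n ^ 3) := by
      gcongr
      linarith
    _ = 8 * |l| * Real.log n ^ 4 := by ring

end Assembly

section PowerFibers

universe u v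

theorem ncard_union_union_le_mul {α : Type*} {A B C : Set α} {ε T : ℝ}
    (hA : A.ncard ≤ ε / 3 * T) (hB : B.ncard ≤ ε / 3 * T) (hC : C.ncard ≤ ε / 3 * T) :
    ((A ∪ B ∪ C).ncard : ℝ) ≤ ε * T := by
  have h : ((A ∪ B ∪ C).ncard : ℝ) ≤ A.ncard + B.ncard + C.ncard := by
    exact_mod_cast (Set.ncard_union_le _ _).trans (add_le_add_left (Set.ncard_union_le _ _) _)
  linarith

theorem power_fibers_bound_general (m : ℕ) (hm : 0 < m) (ε : ℝ) (hε : 0 < ε) :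
    ∃ l : ℝ, ∀ (F : Type u) (V : Type v) [Field F] [Finite F] [AddCommGroup V] [Module F V],
      2 ≤ finrank F V → ∃ S : Set (SpecialLinearGroup F V),
        (S.ncard : ℝ) ≤ ε * (Nat.card (SpecialLinearGroup F V) : ℝ) ∧
        ∀ g ∉ S, (Nat.card {h : End F V // h ^ m = toModuleEnd F V g ^ m} : ℝ) <
          (Nat.card F : ℝ) ^ (l * Real.log (finrank F V)) := by
  classical
  have hε3 : 0 < ε / 3 := by positivity
  obtain ⟨j, hj⟩ := exists_two_mul_pow_mul_half_pow_le m hε3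
  obtain ⟨D, hD⟩ := exists_pow_lt_of_lt_one
    (show 0 < ε / 3 / (2 * ((m : ℝ) * 2 + 1) ^ m) by positivity) (one_half_lt_one (α := ℝ))
  rw [lt_div_iff₀' (by positivity)] at hD
  set C : ℝ := m + ((↑(j + 1) + 1) * D) ^ 2
  set K : ℝ := 3 * (m + 1) ^ m / ε with hK
  refine ⟨C * (3 * K + 2 * m) + 1, fun F V _ _ _ _ hn ↦ ?_⟩
  have : FiniteDimensional F V := FiniteDimensional.of_finrank_pos (by omega)
  have : Nontrivial V := nontrivial_of_finrank_pos (R := F) (by omega)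
  set n := finrank F V
  set R : ℝ := K * (1 + Real.log n) with hR
  have hR0 : 0 < R := by positivity
  refine ⟨fullKernel F V m (j + 2) 0 ∪ fullKernel F V m 2 D ∪ manyFactors F V m R,
    ncard_union_union_le_mul ?_ ?_ ?_, fun g hg ↦ ?_⟩
  · refine (ncard_fullKernel_le hm j 0).trans ?_
    rw [add_zero]
    gcongr
  · refine (ncard_fullKernel_le hm 0 D).trans ?_
    rw [Nat.cast_zero, zero_add, zero_add]
    gcongr
  · refine le_of_mul_le_mul_right ((ncard_manyFactors_mul_le hm R).trans_eq ?_) hR0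
    rw [hR, hK]
    field_simp
    exact mul_comm _ _
  · simp only [Set.mem_union, not_or] at hg
    refine (natCard_pow_eq_pow_le_rpow hm hg.1.1 hg.1.2 hg.2).trans_lt
      (Real.rpow_lt_rpow_of_exponent_lt (by exact_mod_cast Finite.one_lt_card (α := F)) ?_)
    exact mul_add_lt_mul_log (by positivity) (by positivity) (Nat.cast_nonneg _) hn

variable {F ι : Type*} [Field F] [Finite F] [Fintype ι] [DecidableEq ι] {m : ℕ}

theorem natCard_matrix_pow_eq_le (g : Matrix.SpecialLinearGroup ι F) :
    Nat.card {h : Matrix.SpecialLinearGroup ι F // h ^ m = g ^ m} ≤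
      Nat.card {h : End F (ι → F) //
        h ^ m = toModuleEnd F (ι → F) (Matrix.SpecialLinearGroup.toLin'_equiv g) ^ m} := by
  have : Finite (End F (ι → F)) := DFunLike.finite _
  let e : Matrix.SpecialLinearGroup ι F ≃* SpecialLinearGroup F (ι → F) :=
    Matrix.SpecialLinearGroup.toLin'_equiv
  let φ := (toModuleEnd F (ι → F)).comp e.toMonoidHom
  have hφ : Function.Injective φ := fun g g' h ↦ e.injective
    (SpecialLinearGroup.toLinearEquiv_injective (LinearEquiv.toLinearMap_injective h))
  exact Nat.card_le_card_of_injective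
    (Subtype.map φ fun h hh ↦ by rw [← map_pow, hh, map_pow]; rfl) (Subtype.map_injective _ hφ)

theorem exists_matrix_ncard_le_and_natCard_pow_eq_lt {ε B : ℝ}
    (hS : ∃ S : Set (SpecialLinearGroup F (ι → F)),
      (S.ncard : ℝ) ≤ ε * (Nat.card (SpecialLinearGroup F (ι → F)) : ℝ) ∧
      ∀ g ∉ S, (Nat.card {h : End F (ι → F) // h ^ m = toModuleEnd F (ι → F) g ^ m} : ℝ) < B) :
    ∃ S : Set (Matrix.SpecialLinearGroup ι F),
      (S.ncard : ℝ) ≤ ε * (Nat.card (Matrix.SpecialLinearGroup ι F) : ℝ) ∧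
      ∀ g ∉ S, (Nat.card {h : Matrix.SpecialLinearGroup ι F // h ^ m = g ^ m} : ℝ) < B := by
  obtain ⟨S, hS, hfib⟩ := hS
  let e : Matrix.SpecialLinearGroup ι F ≃* SpecialLinearGroup F (ι → F) :=
    Matrix.SpecialLinearGroup.toLin'_equiv
  refine ⟨e ⁻¹' S, ?_, fun g hg ↦ lt_of_le_of_lt ?_ (hfib (e g) hg)⟩
  · rwa [Set.ncard_preimage_of_injective_subset_range e.injective
      (e.surjective.range_eq ▸ Set.subset_univ S), Nat.card_congr e.toEquiv]
  · exact_mod_cast natCard_matrix_pow_eq_le g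

end PowerFibers

/-- For every positive integer `m` and every `ε > 0` there exists `l` such that for every
finite field `F_q` and `n ≥ 2`, there is a subset `S ⊆ SL_n(F_q)` with
`|S| ≤ ε |SL_n(F_q)|` such that every `g ∉ S` has at most `q^{l (log n)^4}` elements `h`
with `h^m = g^m`. -/
theorem power_fibers_bound (m : ℕ) (hm : 0 < m) (ε : ℝ) (hε : 0 < ε) :
    ∃ l : ℝ, ∀ (F : Type) [Field F] [Fintype F] (n : ℕ), 2 ≤ n →
      ∃ S : Set (Matrix.SpecialLinearGroup (Fin n) F),
        (S.ncard : ℝ) ≤ ε * (Nat.card (Matrix.SpecialLinearGroup (Fin n) F) : ℝ) ∧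
        ∀ g ∉ S,
          (Nat.card {h : Matrix.SpecialLinearGroup (Fin n) F // h ^ m = g ^ m} : ℝ) <
            (Fintype.card F : ℝ) ^ (l * Real.log n ^ 4) := by
  obtain ⟨l, hl⟩ := power_fibers_bound_general m hm ε hε
  refine ⟨8 * |l|, fun F _ _ n hn ↦ ?_⟩
  obtain ⟨S, hS, hfib⟩ := exists_matrix_ncard_le_and_natCard_pow_eq_lt
    (hl F (Fin n → F) (by rwa [finrank_fin_fun]))
  rw [finrank_fin_fun, Nat.card_eq_fintype_card (α := F)] at hfib
  exact ⟨S, hS, fun g hg ↦ (hfib g hg).trans_le (Real.rpow_le_rpow_of_exponent_le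
    (by exact_mod_cast Fintype.card_pos) (mul_log_le_mul_log_pow_four l hn))⟩
end

section
/- Let d ≥ 1 and let w ≠ 1 be an admissible word in the free group F_d in which all d variables occur: every variable x_i occurs in the reduced expression of w exactly once with exponent 1 and exactly once with exponent −1. Then there exists a positive integer k (depending only on w) such that for every finite group G and every g ∈ G, the number N_w(g) of d-tuples (g1, …, g_d) ∈ G^d with w(g1, …, g_d) = g equals |G|^{d−1} · ∑_{χ ∈ Irr(G)} χ(g) / χ(1)^k, where Irr(G) is the set of irreducible complex characters of G. -/
open CategoryTheory

/-!
Let `a … b … a⁻¹ … b⁻¹` be two interleaved pairs of letters of a word `w`. By Schur's lemma,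
averaging an irreducible character `χ` over the values of `a` and `b` deletes these four letters,
rearranges the rest of the word and costs a factor `1 / χ(1)²`. Such a step removes a handle from
the surface glued from a polygon with boundary `w`, and an admissible word without interleaved
letters has a cancelling pair `a a⁻¹`. Hence, if the surface has genus `h`,
`∑ₓ χ(w(x)⁻¹ g) = |G|ᵈ χ(g) / χ(1)²ʰ`, and column orthogonality, `∑_χ χ(1) χ(g) = |G|` for `g = 1`
and `0` otherwise, turns this into the number of solutions of `w(x) = g`, with exponent `2h - 1`.
-/

universe u v

section Words

variable {α : Type*}

/-- The formal inverse of a letter `xᵢ` or `xᵢ⁻¹`, with letters encoded as in `FreeGroup`. -/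
def invLetter (a : α × Bool) : α × Bool := (a.1, !a.2)

@[simp]
theorem invLetter_invLetter (a : α × Bool) : invLetter (invLetter a) = a := by
  simp [invLetter]

theorem invLetter_ne_self (a : α × Bool) : invLetter a ≠ a := fun h => by
  simpa [invLetter] using congrArg Prod.snd h

theorem eq_or_eq_invLetter_of_fst_eq {a c : α × Bool} (h : c.1 = a.1) :
    c = a ∨ c = invLetter a := by
  obtain ⟨i, s⟩ := a
  obtain ⟨j, t⟩ := c
  cases s <;> cases t <;> simp_all [invLetter]

/-- The notion of an admissible word, for a word that need not be reduced: each variable that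
occurs in it occurs exactly once with each exponent `1` and `-1`. -/
def IsAdmissible (L : List (α × Bool)) : Prop :=
  L.Nodup ∧ ∀ a ∈ L, invLetter a ∈ L

theorem isAdmissible_of_forall_count_eq_one [BEq α] [LawfulBEq α] {L : List (α × Bool)}
    (h : ∀ i, L.count (i, true) = 1 ∧ L.count (i, false) = 1) : IsAdmissible L := by
  have hcount : ∀ a, L.count a = 1 := by
    rintro ⟨i, _ | _⟩
    exacts [(h i).2, (h i).1]
  exact ⟨List.nodup_iff_count_le_one.2 fun a => (hcount a).le,
    fun a _ => List.count_pos_iff.1 (by rw [hcount]; exact one_pos)⟩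

namespace IsAdmissible

variable {L : List (α × Bool)} {a : α × Bool}

theorem of_perm {L' : List (α × Bool)} (hL : IsAdmissible L) (h : L.Perm L') : IsAdmissible L' :=
  ⟨h.nodup_iff.1 hL.1, fun a ha => h.mem_iff.1 (hL.2 a (h.mem_iff.2 ha))⟩

theorem fst_ne_of_mem (hL : IsAdmissible (a :: invLetter a :: L)) {c : α × Bool} (hc : c ∈ L) :
    c.1 ≠ a.1 := by
  have hnd := hL.1
  simp only [List.nodup_cons, List.mem_cons, not_or] at hnd
  intro h
  rcases eq_or_eq_invLetter_of_fst_eq h with rfl | rfl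
  exacts [hnd.1.2 hc, hnd.2.1 hc]

theorem of_cons_cons (hL : IsAdmissible (a :: invLetter a :: L)) : IsAdmissible L := by
  refine ⟨(List.nodup_cons.1 (List.nodup_cons.1 hL.1).2).2, fun c hc => ?_⟩
  have hne := hL.fst_ne_of_mem hc
  have hmem : invLetter c ∈ a :: invLetter a :: L := hL.2 c (by simp [hc])
  simp only [List.mem_cons] at hmem
  rcases hmem with h | h | h
  · exact absurd (congrArg Prod.fst h) hne
  · exact absurd (congrArg Prod.fst h) hne
  · exact h

theorem invRev (hL : IsAdmissible L) : IsAdmissible (FreeGroup.invRev L) := by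
  have hmem (c : α × Bool) : c ∈ FreeGroup.invRev L ↔ invLetter c ∈ L := by
    change c ∈ (L.map invLetter).reverse ↔ _
    rw [List.mem_reverse, List.mem_map]
    exact ⟨by rintro ⟨a, ha, rfl⟩; simpa using ha, fun h => ⟨_, h, by simp⟩⟩
  exact ⟨List.nodup_reverse.2 (hL.1.map (Function.LeftInverse.injective invLetter_invLetter)),
    fun c hc => (hmem _).2 (hL.2 _ ((hmem c).1 hc))⟩

theorem exists_cancelling_or_interleaved_of_eq_append (hL : IsAdmissible L)
    {P M T : List (α × Bool)} (h : L = P ++ a :: (M ++ invLetter a :: T)) :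
    (∃ P T a, L = P ++ a :: invLetter a :: T) ∨
      ∃ P Q R S T a b, L = P ++ a :: (Q ++ b :: (R ++ invLetter a :: (S ++ invLetter b :: T))) := by
  induction hn : M.length using Nat.strong_induction_on generalizing P M T a with
  | _ n ih =>
    obtain _ | ⟨b, M⟩ := M
    · exact .inl ⟨P, T, a, h⟩
    have hb : invLetter b ∈ L := hL.2 b (by simp [h])
    have hba : b.1 ≠ a.1 := by
      refine IsAdmissible.fst_ne_of_mem (L := P ++ b :: (M ++ T)) (hL.of_perm ?_) (by simp)
      classical
      rw [h, List.perm_iff_count]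
      intro c
      simp only [List.count_append, List.count_cons]
      omega
    have hb_ne (c : α × Bool) (hc : c.1 = a.1) : invLetter b ≠ c := by
      rintro rfl
      exact hba hc
    simp only [h, List.mem_append, List.mem_cons, List.cons_append, hb_ne a rfl,
      hb_ne (invLetter a) rfl, invLetter_ne_self, false_or] at hb
    -- If `b⁻¹` also lies between `a` and `a⁻¹`, the pair `b … b⁻¹` is a shorter one to start from.
    rcases hb with hP | hM | hT
    · obtain ⟨P₁, P₂, rfl⟩ := List.append_of_mem hP
      exact .inr ⟨P₁, P₂, [], M, T, invLetter b, a, by simp [h]⟩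
    · obtain ⟨M₁, M₂, rfl⟩ := List.append_of_mem hM
      refine ih M₁.length ?_ (a := b) (P := P ++ [a]) (T := M₂ ++ invLetter a :: T)
        (by simp [h]) rfl
      rw [← hn, List.length_cons, List.length_append]
      omega
    · obtain ⟨T₁, T₂, rfl⟩ := List.append_of_mem hT
      exact .inr ⟨P, [], M, T₁, T₂, a, b, by simp [h]⟩

theorem exists_cancelling_or_interleaved (hL : IsAdmissible L) (hne : L ≠ []) :
    (∃ P T a, L = P ++ a :: invLetter a :: T) ∨
      ∃ P Q R S T a b, L = P ++ a :: (Q ++ b :: (R ++ invLetter a :: (S ++ invLetter b :: T))) := by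
  obtain ⟨a, L', rfl⟩ := List.exists_cons_of_ne_nil hne
  have ha : invLetter a ∈ L' :=
    (List.mem_cons.1 (hL.2 a (by simp))).resolve_left (invLetter_ne_self a)
  obtain ⟨M, T, rfl⟩ := List.append_of_mem ha
  exact hL.exists_cancelling_or_interleaved_of_eq_append (P := []) rfl

end IsAdmissible

theorem perm_cancelling (P T : List (α × Bool)) (a : α × Bool) :
    (P ++ a :: invLetter a :: T).Perm (a :: invLetter a :: (P ++ T)) :=
  List.perm_middle.trans (List.perm_middle.cons a)

theorem perm_interleaved (P Q R S T : List (α × Bool)) (a b : α × Bool) :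
    (P ++ a :: (Q ++ b :: (R ++ invLetter a :: (S ++ invLetter b :: T)))).Perm
      (a :: invLetter a :: b :: invLetter b :: (P ++ S ++ R ++ Q ++ T)) := by
  classical
  rw [List.perm_iff_count]
  intro c
  simp only [List.count_append, List.count_cons]
  omega

/-- `HasGenus L h`: gluing the sides of a polygon labelled by the admissible word `L` yields a
closed orientable surface of genus `h`. It is encoded by the cut-and-paste moves that reduce `L` to
the empty word, `handle` being the one that removes a handle. -/
inductive HasGenus : List (α × Bool) → ℕ → Prop
  | nil : HasGenus [] 0
  | cancel (P T : List (α × Bool)) (a : α × Bool) {h : ℕ} :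
      HasGenus (P ++ T) h → HasGenus (P ++ a :: invLetter a :: T) h
  | handle (P Q R S T : List (α × Bool)) (a b : α × Bool) {h : ℕ} :
      HasGenus (P ++ S ++ R ++ Q ++ T) h →
        HasGenus (P ++ a :: (Q ++ b :: (R ++ invLetter a :: (S ++ invLetter b :: T)))) (h + 1)

theorem IsAdmissible.exists_hasGenus {L : List (α × Bool)} (hL : IsAdmissible L) :
    ∃ h, HasGenus L h := by
  induction hn : L.length using Nat.strong_induction_on generalizing L with
  | _ n ih =>
    by_cases hne : L = []
    · exact ⟨0, hne ▸ .nil⟩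
    rcases hL.exists_cancelling_or_interleaved hne with
      ⟨P, T, a, rfl⟩ | ⟨P, Q, R, S, T, a, b, rfl⟩
    · have hPT := (hL.of_perm (perm_cancelling P T a)).of_cons_cons
      obtain ⟨h, hh⟩ := ih _ (by simp at hn ⊢; omega) hPT rfl
      exact ⟨h, .cancel P T a hh⟩
    · have hrest := (hL.of_perm (perm_interleaved P Q R S T a b)).of_cons_cons.of_cons_cons
      obtain ⟨h, hh⟩ := ih _ (by simp at hn ⊢; omega) hrest rfl
      exact ⟨h + 1, .handle P Q R S T a b hh⟩

theorem HasGenus.pos_of_isReduced {L : List (α × Bool)} {h : ℕ} (hL : HasGenus L h)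
    (hred : FreeGroup.IsReduced L) (hne : L ≠ []) : 0 < h := by
  cases hL with
  | nil => exact absurd rfl hne
  | cancel P T a =>
    have := (List.isChain_cons_cons.1 (List.isChain_append.1 hred).2.1).1 rfl
    simp [invLetter] at this
  | handle => exact Nat.succ_pos _

end Words

section Evaluation

variable {α G : Type*} [Group G]

/-- The value in `G` of a word when the value of each variable is given by `x`. -/
def evalWord (x : α → G) (L : List (α × Bool)) : G :=
  FreeGroup.lift x (FreeGroup.mk L)

/-- The value in `G` of a letter when the value of each variable is given by `x`. -/
def evalLetter (x : α → G) (a : α × Bool) : G :=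
  cond a.2 (x a.1) (x a.1)⁻¹

@[simp]
theorem evalWord_nil (x : α → G) : evalWord x [] = 1 := by
  simp [evalWord, FreeGroup.lift_mk]

@[simp]
theorem evalWord_cons (x : α → G) (a : α × Bool) (L : List (α × Bool)) :
    evalWord x (a :: L) = evalLetter x a * evalWord x L := by
  simp [evalWord, FreeGroup.lift_mk, evalLetter]

@[simp]
theorem evalWord_append (x : α → G) (L L' : List (α × Bool)) :
    evalWord x (L ++ L') = evalWord x L * evalWord x L' := by
  simp [evalWord, FreeGroup.lift_mk]

@[simp]
theorem evalLetter_invLetter (x : α → G) (a : α × Bool) :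
    evalLetter x (invLetter a) = (evalLetter x a)⁻¹ := by
  rcases a with ⟨i, _ | _⟩ <;> simp [evalLetter, invLetter]

variable [DecidableEq α]

/-- The assignment obtained from `x` by changing one variable so that the letter `a` takes the
value `u`. -/
def setLetter (x : α → G) (a : α × Bool) (u : G) : α → G :=
  Function.update x a.1 (cond a.2 u u⁻¹)

@[simp]
theorem evalLetter_setLetter_self (x : α → G) (a : α × Bool) (u : G) :
    evalLetter (setLetter x a u) a = u := by
  rcases a with ⟨i, _ | _⟩ <;> simp [evalLetter, setLetter]

theorem evalLetter_setLetter_of_ne (x : α → G) {a c : α × Bool} (u : G) (h : c.1 ≠ a.1) :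
    evalLetter (setLetter x a u) c = evalLetter x c := by
  simp [evalLetter, setLetter, Function.update_of_ne h]

theorem evalWord_setLetter_of_forall_ne (x : α → G) {a : α × Bool} (u : G) {L : List (α × Bool)}
    (h : ∀ c ∈ L, c.1 ≠ a.1) : evalWord (setLetter x a u) L = evalWord x L := by
  induction L with
  | nil => simp
  | cons c L ih =>
    simp only [List.mem_cons, forall_eq_or_imp] at h
    rw [evalWord_cons, evalWord_cons, ih h.2, evalLetter_setLetter_of_ne x u h.1]

theorem setLetter_setLetter_evalLetter (x : α → G) (a : α × Bool) (u : G) :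
    setLetter (setLetter x a u) a (evalLetter x a) = x := by
  rcases a with ⟨i, _ | _⟩ <;> simp [evalLetter, setLetter]

theorem sum_sum_setLetter [Fintype α] [Fintype G] {M : Type*} [AddCommMonoid M] (a : α × Bool)
    (F : (α → G) → M) : ∑ x, ∑ u, F (setLetter x a u) = Nat.card G • ∑ x, F x := by
  have hinv : Function.Involutive
      fun p : (α → G) × G => (setLetter p.1 a p.2, evalLetter p.1 a) := by
    rintro ⟨x, u⟩
    simp [setLetter_setLetter_evalLetter]
  have h := Equiv.sum_comp hinv.toPerm fun p => F p.1
  simp only [Fintype.sum_prod_type, Function.Involutive.coe_toPerm] at h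
  simp [h, Finset.smul_sum]

theorem evalWord_setLetter_setLetter_interleaved (x : α → G) {P Q R S T : List (α × Bool)}
    {a b : α × Bool} (hab : a.1 ≠ b.1) (ha : ∀ c ∈ P ++ S ++ R ++ Q ++ T, c.1 ≠ a.1)
    (hb : ∀ c ∈ P ++ S ++ R ++ Q ++ T, c.1 ≠ b.1) (u v : G) :
    evalWord (setLetter (setLetter x a u) b v)
        (P ++ a :: (Q ++ b :: (R ++ invLetter a :: (S ++ invLetter b :: T)))) =
      evalWord x P * u * evalWord x Q * v * evalWord x R * u⁻¹ * evalWord x S * v⁻¹ *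
        evalWord x T := by
  simp only [List.mem_append, or_imp, forall_and] at ha hb
  obtain ⟨⟨⟨⟨haP, haS⟩, haR⟩, haQ⟩, haT⟩ := ha
  obtain ⟨⟨⟨⟨hbP, hbS⟩, hbR⟩, hbQ⟩, hbT⟩ := hb
  simp only [evalWord_append, evalWord_cons, evalLetter_invLetter, evalLetter_setLetter_self,
    evalLetter_setLetter_of_ne _ _ hab, evalWord_setLetter_of_forall_ne _ _ haP,
    evalWord_setLetter_of_forall_ne _ _ haQ, evalWord_setLetter_of_forall_ne _ _ haR,
    evalWord_setLetter_of_forall_ne _ _ haS, evalWord_setLetter_of_forall_ne _ _ haT,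
    evalWord_setLetter_of_forall_ne _ _ hbP, evalWord_setLetter_of_forall_ne _ _ hbQ,
    evalWord_setLetter_of_forall_ne _ _ hbR, evalWord_setLetter_of_forall_ne _ _ hbS,
    evalWord_setLetter_of_forall_ne _ _ hbT, mul_assoc]

end Evaluation

section FiniteDimensional

variable {K : Type u} {G : Type v} [Field K] [Monoid G]

theorem isIrreducible_of_simple (V : FDRep K G) [Simple V] :
    Representation.IsIrreducible V.ρ := by
  have : Nontrivial (Subrepresentation V.ρ) := by
    refine ⟨⊥, ⊤, fun h => id_nonzero V ?_⟩
    ext v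
    have hv : v ∈ (⊥ : Subrepresentation V.ρ) := h ▸ trivial
    exact hv
  refine ⟨fun W => or_iff_not_imp_left.2 fun hW => ?_⟩
  let ι : FDRep.of W.toRepresentation ⟶ V :=
    ⟨InducedCategory.homMk (ModuleCat.ofHom W.toSubmodule.subtype), fun g => rfl⟩
  have : Mono ι := ConcreteCategory.mono_of_injective ι W.toSubmodule.subtype_injective
  have hι : ι ≠ 0 := fun h0 => hW <| by
    refine eq_bot_iff.2 fun v hv => ?_
    exact congrArg (fun f : FDRep.of W.toRepresentation ⟶ V => f.hom.hom.hom ⟨v, hv⟩) h0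
  have : IsIso ι := (Simple.mono_isIso_iff_nonzero ι).2 hι
  refine eq_top_iff.2 fun v _ => ?_
  obtain ⟨w, rfl⟩ := (ConcreteCategory.bijective_of_isIso ι).2 v
  exact w.2

theorem simple_of_isIrreducible (V : FDRep K G) [hV : Representation.IsIrreducible V.ρ] :
    Simple V := by
  refine ⟨fun {W} f hf => ⟨?_, fun hne => ?_⟩⟩
  · rintro hiso rfl
    have h1 : 𝟙 V = 0 := by
      simp [← IsIso.inv_hom_id (f := (0 : W ⟶ V))]
    have h : (⊥ : Subrepresentation V.ρ) = ⊤ := eq_top_iff.2 fun v _ =>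
      congrArg (fun f : V ⟶ V => f.hom.hom.hom v) h1
    exact bot_ne_top h
  · let φ : Representation.IntertwiningMap W.ρ V.ρ :=
      ⟨f.hom.hom.hom, fun g => congrArg (fun h => h.hom.hom) (f.comm g)⟩
    have : φ ≠ 0 := fun h => hne <| by
      ext v
      exact congrArg (fun ψ : Representation.IntertwiningMap W.ρ V.ρ => ψ v) h
    have hsurj : Function.Surjective f :=
      (Representation.IsIrreducible.surjective_or_eq_zero φ).resolve_right this
    have : Epi f := ConcreteCategory.epi_of_surjective f hsurj
    exact isIso_of_mono_of_epi f

end FiniteDimensional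

section Irreducible

variable {K G V W : Type*} [Field K] [Group G] [AddCommGroup V] [Module K V] [AddCommGroup W]
  [Module K W]

theorem isIrreducible_of_equiv {ρ : Representation K G V} {σ : Representation K G W}
    (φ : ρ.Equiv σ) [ρ.IsIrreducible] : σ.IsIrreducible := by
  let e := Representation.IntertwiningMap.equivLinearMapAsModule ρ σ φ.toIntertwiningMap
  rw [Representation.irreducible_iff_isSimpleModule_asModule]
  exact IsSimpleModule.congr (LinearEquiv.ofBijective e φ.bijective).symm

variable [IsAlgClosed K] [FiniteDimensional K V] (ρ : Representation K G V) [ρ.IsIrreducible]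

theorem character_one_smul_eq_trace_smul_one_of_commute {T : Module.End K V}
    (hT : ∀ g, Commute T (ρ g)) : ρ.character 1 • T = LinearMap.trace K V T • 1 := by
  obtain ⟨c, hc⟩ :=
    (Representation.IsIrreducible.algebraMap_intertwiningMap_bijective_of_isAlgClosed (ρ := ρ)).2
      ⟨T, fun g => hT g⟩
  obtain rfl : c • 1 = T := congrArg Representation.IntertwiningMap.toLinearMap hc
  rw [map_smul, LinearMap.trace_one, smul_smul, ρ.char_one, smul_eq_mul, mul_comm]

theorem character_one_smul_sum_conj [Fintype G] (T : Module.End K V) :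
    ρ.character 1 • ∑ a, ρ a * T * ρ a⁻¹ = (Nat.card G * LinearMap.trace K V T) • 1 := by
  have hcomm (g : G) : Commute (∑ a, ρ a * T * ρ a⁻¹) (ρ g) := by
    rw [commute_iff_eq, Finset.sum_mul, Finset.mul_sum]
    refine Fintype.sum_equiv (Equiv.mulLeft g⁻¹) _ _ fun b => ?_
    simp only [Equiv.coe_mulLeft, mul_inv_rev, inv_inv, map_mul, mul_assoc]
    rw [← mul_assoc (ρ g) (ρ g⁻¹), ← map_mul ρ g, mul_inv_cancel, map_one, one_mul]
  have htrace (a : G) : LinearMap.trace K V (ρ a * T * ρ a⁻¹) = LinearMap.trace K V T := by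
    rw [LinearMap.trace_mul_comm, ← mul_assoc, ← map_mul, inv_mul_cancel, map_one, one_mul]
  rw [character_one_smul_eq_trace_smul_one_of_commute ρ hcomm, map_sum]
  simp [htrace]

theorem character_one_smul_sum_smul [Fintype G] {φ : G → K} (hφ : ∀ g h, φ (h * g * h⁻¹) = φ g) :
    ρ.character 1 • ∑ g, φ g • ρ g⁻¹ = (∑ g, φ g * ρ.character g⁻¹) • 1 := by
  have hcomm (g : G) : Commute (∑ b, φ b • ρ b⁻¹) (ρ g) := by
    rw [commute_iff_eq, Finset.sum_mul, Finset.mul_sum]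
    refine Fintype.sum_equiv (MulAut.conj g⁻¹).toEquiv _ _ fun b => ?_
    simp only [MulEquiv.toEquiv_eq_coe, MulEquiv.coe_toEquiv, MulAut.conj_apply, hφ,
      smul_mul_assoc, mul_smul_comm, ← map_mul]
    congr 2
    group
  rw [character_one_smul_eq_trace_smul_one_of_commute ρ hcomm, map_sum]
  simp [Representation.character]

theorem sum_character_mul_character_inv_self [Fintype G] [NeZero (Nat.card G : K)] :
    ∑ g, ρ.character g * ρ.character g⁻¹ = Nat.card G := by
  have : Invertible (Nat.card G : K) := invertibleOfNonzero (NeZero.ne _)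
  have h := Representation.char_orthonormal ρ ρ
  rwa [if_pos ⟨.refl ρ⟩, inv_mul_eq_one₀ (NeZero.ne _), eq_comm] at h

theorem character_one_ne_zero [Finite G] [NeZero (Nat.card G : K)] : ρ.character 1 ≠ 0 := by
  intro h
  have := Fintype.ofFinite G
  have := IsSimpleModule.nontrivial (MonoidAlgebra K G) ρ.asModule
  have : Nontrivial V := ρ.asModuleEquiv.symm.nontrivial
  have h1 := character_one_smul_sum_smul ρ fun g h => ρ.char_conj g h
  rw [h, zero_smul, sum_character_mul_character_inv_self, eq_comm, smul_eq_zero] at h1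
  exact h1.elim (NeZero.ne _) one_ne_zero

variable [Fintype G]

theorem character_one_mul_sum_character_conj (p u v : G) :
    ρ.character 1 * ∑ a, ρ.character (p * a * u * a⁻¹ * v) =
      Nat.card G * (ρ.character u * ρ.character (p * v)) := by
  have h := congrArg (fun T => LinearMap.trace K V (ρ p * T * ρ v))
    (character_one_smul_sum_conj ρ (ρ u))
  simp only [mul_smul_comm, smul_mul_assoc, map_smul, smul_eq_mul, mul_one, Finset.mul_sum,
    Finset.sum_mul, map_sum, ← map_mul, ← mul_assoc] at h
  rw [Finset.mul_sum, ← mul_assoc]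
  exact h

theorem character_one_mul_sum_character_mul_character [NeZero (Nat.card G : K)] (q u p v : G) :
    ρ.character 1 * ∑ b, ρ.character (q * b * u) * ρ.character (p * b⁻¹ * v) =
      Nat.card G * ρ.character (p * u * q * v) := by
  have h := congrArg (fun T => LinearMap.trace K V (ρ (p * u) * T * ρ (q * v)))
    (character_one_smul_sum_smul ρ fun g h => ρ.char_conj g h)
  simp only [sum_character_mul_character_inv_self, mul_smul_comm, smul_mul_assoc, map_smul,
    smul_eq_mul, mul_one, Finset.mul_sum, Finset.sum_mul, map_sum, ← map_mul,
    ← mul_assoc (p * u)] at h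
  rw [Finset.mul_sum]
  refine Eq.trans ?_ h
  refine Fintype.sum_equiv ((Equiv.mulLeft q).trans (Equiv.mulRight u)) _ _ fun b => ?_
  simp only [Equiv.trans_apply, Equiv.coe_mulLeft, Equiv.coe_mulRight]
  congr 2
  rw [Representation.character]
  congr 2
  group

theorem character_one_sq_mul_sum_sum_character [NeZero (Nat.card G : K)] (p q r s t : G) :
    ρ.character 1 ^ 2 * ∑ a, ∑ b, ρ.character (p * a * q * b * r * a⁻¹ * s * b⁻¹ * t) =
      (Nat.card G : K) ^ 2 * ρ.character (p * s * r * q * t) := by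
  have hconj (b : G) := character_one_mul_sum_character_conj ρ p (q * b * r) (s * b⁻¹ * t)
  have hmerge := character_one_mul_sum_character_mul_character ρ q r (p * s) t
  simp only [mul_assoc] at hconj hmerge ⊢
  rw [Finset.sum_comm, pow_two, mul_assoc, Finset.mul_sum]
  simp only [hconj]
  rw [← Finset.mul_sum, mul_left_comm, hmerge]
  ring

end Irreducible

section GroupAlgebra

variable {K G : Type*} [Field K] [Monoid G]
  (M : Type*) [AddCommGroup M] [Module K M] [Module (MonoidAlgebra K G) M]
  [IsScalarTower K (MonoidAlgebra K G) M]

theorem asAlgebraHom_ofModule'_apply (r : MonoidAlgebra K G) (m : M) :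
    (Representation.ofModule' (k := K) (G := G) M).asAlgebraHom r m = r • m := by
  have h : (Representation.ofModule' (k := K) (G := G) M).asAlgebraHom = Algebra.lsmul K K M :=
    (MonoidAlgebra.lift K (M →ₗ[K] M) G).apply_symm_apply _
  rw [h, Algebra.lsmul_coe]

theorem isIrreducible_ofModule' [IsSimpleModule (MonoidAlgebra K G) M] :
    (Representation.ofModule' (k := K) (G := G) M).IsIrreducible := by
  rw [Representation.irreducible_iff_isSimpleModule_asModule]
  let ρ : Representation K G M := .ofModule' M
  let φ : ρ.asModule ≃ₗ[MonoidAlgebra K G] M :=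
    { ρ.asModuleEquiv.toAddEquiv with
      map_smul' r m := asAlgebraHom_ofModule'_apply M r _ }
  exact IsSimpleModule.congr φ

end GroupAlgebra

section Jacobson

variable {K : Type u} {G : Type v} [Field K] [Group G] [Finite G] [NeZero (Nat.card G : K)]

theorem groupAlgebra_eq_zero_of_forall_isIrreducible {e : MonoidAlgebra K G}
    (he : ∀ (V : Type (max u v)) [AddCommGroup V] [Module K V] [FiniteDimensional K V]
      (ρ : Representation K G V) [ρ.IsIrreducible], ρ.asAlgebraHom e = 0) : e = 0 := by
  suffices e ∈ Ring.jacobson (MonoidAlgebra K G) by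
    -- Maschke's theorem makes `K[G]` semisimple.
    rwa [Ring.jacobson, IsSemisimpleModule.jacobson_eq_bot, Submodule.mem_bot] at this
  rw [Ring.jacobson_eq_sInf_isMaximal, Submodule.mem_sInf]
  intro I hI
  have := isSimpleModule_iff_isCoatom.2 (Ideal.isMaximal_def.1 hI)
  have : FiniteDimensional K (MonoidAlgebra K G ⧸ I) := Module.Finite.trans (MonoidAlgebra K G) _
  have := isIrreducible_ofModule' (K := K) (G := G) (MonoidAlgebra K G ⧸ I)
  have hmk : e • (Submodule.Quotient.mk 1 : MonoidAlgebra K G ⧸ I) = 0 := by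
    rw [← asAlgebraHom_ofModule'_apply (K := K), he, LinearMap.zero_apply]
  rwa [← Submodule.Quotient.mk_smul, Submodule.Quotient.mk_eq_zero, smul_eq_mul, mul_one] at hmk

end Jacobson

section IrreducibleCharacters

variable (K : Type u) (G : Type v) [Field K] [Group G]

/-- The set of irreducible characters of `G` over `K`. -/
def irrCharacters : Set (G → K) :=
  {f | ∃ V : FDRep K G, Simple V ∧ f = V.character}

variable {K G}

theorem character_mem_irrCharacters {V : Type*} [AddCommGroup V] [Module K V]
    [FiniteDimensional K V] (ρ : Representation K G V) [ρ.IsIrreducible] :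
    ρ.character ∈ irrCharacters K G := by
  let e := (Module.finBasis K V).equivFun
  let σ : Representation K G (Fin (Module.finrank K V) → K) :=
    (e.conjAlgEquiv K).toMonoidHom.comp ρ
  let φ : ρ.Equiv σ := .mk e fun g => by
    ext v
    simp [σ, LinearEquiv.conjAlgEquiv_apply]
  have : Representation.IsIrreducible (FDRep.of σ).ρ := isIrreducible_of_equiv φ
  exact ⟨FDRep.of σ, simple_of_isIrreducible _, Representation.char_iso φ⟩

theorem apply_conj_of_mem_irrCharacters {f : G → K} (hf : f ∈ irrCharacters K G) (g h : G) :
    f (h * g * h⁻¹) = f g := by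
  obtain ⟨V, -, rfl⟩ := hf
  exact V.char_conj g h

variable [IsAlgClosed K] [NeZero (Nat.card G : K)]

theorem apply_one_ne_zero_of_mem_irrCharacters [Finite G] {f : G → K}
    (hf : f ∈ irrCharacters K G) : f 1 ≠ 0 := by
  obtain ⟨V, hV, rfl⟩ := hf
  have := isIrreducible_of_simple V
  exact character_one_ne_zero V.ρ

theorem sum_mul_inv_self_of_mem_irrCharacters [Fintype G] {f : G → K} (hf : f ∈ irrCharacters K G) :
    ∑ g, f g * f g⁻¹ = Nat.card G := by
  obtain ⟨V, hV, rfl⟩ := hf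
  have := isIrreducible_of_simple V
  exact sum_character_mul_character_inv_self V.ρ

theorem sum_mul_inv_eq_zero_of_mem_irrCharacters [Fintype G] {f f' : G → K}
    (hf : f ∈ irrCharacters K G) (hf' : f' ∈ irrCharacters K G) (hne : f ≠ f') :
    ∑ g, f g * f' g⁻¹ = 0 := by
  obtain ⟨V, hV, rfl⟩ := hf
  obtain ⟨W, hW, rfl⟩ := hf'
  have : Invertible (Nat.card G : K) := invertibleOfNonzero (NeZero.ne _)
  have h := FDRep.char_orthonormal V W
  rw [if_neg fun ⟨i⟩ => hne (FDRep.char_iso i)] at h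
  exact (mul_eq_zero.1 h).resolve_left (inv_ne_zero (NeZero.ne _))

variable (K G) in
theorem linearIndependent_irrCharacters [Finite G] :
    LinearIndependent K (Subtype.val : irrCharacters K G → G → K) := by
  have := Fintype.ofFinite G
  refine .of_pairwise_dual_eq_zero_one _
    (fun f => (Nat.card G : K)⁻¹ • ∑ g, f.1 g⁻¹ • LinearMap.proj g) (fun f f' hne => ?_) fun f => ?_
  · have h := sum_mul_inv_eq_zero_of_mem_irrCharacters f'.2 f.2 (Subtype.coe_injective.ne hne.symm)
    simp only [LinearMap.smul_apply, LinearMap.sum_apply, LinearMap.proj_apply, smul_eq_mul,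
      mul_comm (f.1 _⁻¹), h, mul_zero]
  · have h := sum_mul_inv_self_of_mem_irrCharacters f.2
    simp only [LinearMap.smul_apply, LinearMap.sum_apply, LinearMap.proj_apply, smul_eq_mul,
      mul_comm (f.1 _⁻¹), h]
    exact inv_mul_cancel₀ (NeZero.ne _)

variable (K G) in
theorem finite_irrCharacters [Finite G] : (irrCharacters K G).Finite :=
  (linearIndependent_irrCharacters K G).setFinite

theorem eq_zero_of_forall_sum_mul_irrCharacters_eq_zero [Fintype G] {φ : G → K}
    (hφ : ∀ g h, φ (h * g * h⁻¹) = φ g)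
    (horth : ∀ f ∈ irrCharacters K G, ∑ g, φ g * f g⁻¹ = 0) : φ = 0 := by
  let e : MonoidAlgebra K G := ∑ g, .single g⁻¹ (φ g)
  have he : e = 0 := by
    refine groupAlgebra_eq_zero_of_forall_isIrreducible fun V _ _ _ ρ _ => ?_
    have h := character_one_smul_sum_smul ρ hφ
    rw [horth _ (character_mem_irrCharacters ρ), zero_smul] at h
    simpa only [e, map_sum, Representation.asAlgebraHom_single] using
      (smul_eq_zero.1 h).resolve_left (character_one_ne_zero ρ)
  classical
  funext g
  have h := congrArg (fun x => MonoidAlgebra.coeff x g⁻¹) he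
  simpa [e, MonoidAlgebra.coeff_sum, Finsupp.single_apply] using h

theorem sum_irrCharacters_one_mul [Finite G] [DecidableEq G] (h : G) :
    ∑ f ∈ (finite_irrCharacters K G).toFinset, f 1 * f h =
      if h = 1 then (Nat.card G : K) else 0 := by
  have := Fintype.ofFinite G
  let S := (finite_irrCharacters K G).toFinset
  have hS {f : G → K} : f ∈ S ↔ f ∈ irrCharacters K G := Set.Finite.mem_toFinset _
  let φ : G → K := fun h => ∑ f ∈ S, f 1 * f h - if h = 1 then (Nat.card G : K) else 0
  suffices φ = 0 from sub_eq_zero.1 (congrFun this h)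
  refine eq_zero_of_forall_sum_mul_irrCharacters_eq_zero (fun g h => ?_) fun f hf => ?_
  · simp only [φ, conj_eq_one_iff]
    congr 1
    exact Finset.sum_congr rfl fun f hf => by rw [apply_conj_of_mem_irrCharacters (hS.1 hf)]
  · have hsum : ∑ g, (∑ f' ∈ S, f' 1 * f' g) * f g⁻¹ = f 1 * Nat.card G := by
      simp only [Finset.sum_mul, mul_assoc]
      rw [Finset.sum_comm]
      simp only [← Finset.mul_sum]
      rw [Finset.sum_eq_single_of_mem f (hS.2 hf), sum_mul_inv_self_of_mem_irrCharacters hf]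
      intro f' hf' hne
      rw [sum_mul_inv_eq_zero_of_mem_irrCharacters (hS.1 hf') hf hne, mul_zero]
    simp only [φ, sub_mul, Finset.sum_sub_distrib, hsum]
    simp [mul_comm]

theorem card_mul_card_fiber_eq_sum_irrCharacters [Finite G] {X : Type*} [Fintype X] (F : X → G)
    (g : G) :
    (Nat.card G : K) * Nat.card {x // F x = g} =
      ∑ f ∈ (finite_irrCharacters K G).toFinset, f 1 * ∑ x, f ((F x)⁻¹ * g) := by
  classical
  simp only [Finset.mul_sum]
  rw [Finset.sum_comm]
  simp only [sum_irrCharacters_one_mul, inv_mul_eq_one]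
  simp [Finset.sum_ite, Fintype.card_subtype, mul_comm]

end IrreducibleCharacters

section WordMaps

variable {α K G V : Type*} [Fintype α] [DecidableEq α] [Field K] [IsAlgClosed K] [Group G]
  [Fintype G] [NeZero (Nat.card G : K)] [AddCommGroup V] [Module K V] [FiniteDimensional K V]
  (ρ : Representation K G V) [ρ.IsIrreducible]

theorem character_one_sq_mul_sum_character_evalWord_interleaved {P Q R S T : List (α × Bool)}
    {a b : α × Bool} (hab : a.1 ≠ b.1) (ha : ∀ c ∈ P ++ S ++ R ++ Q ++ T, c.1 ≠ a.1)
    (hb : ∀ c ∈ P ++ S ++ R ++ Q ++ T, c.1 ≠ b.1) (g : G) :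
    ρ.character 1 ^ 2 * ∑ x : α → G, ρ.character
        (evalWord x (P ++ a :: (Q ++ b :: (R ++ invLetter a :: (S ++ invLetter b :: T)))) * g) =
      ∑ x : α → G, ρ.character (evalWord x (P ++ S ++ R ++ Q ++ T) * g) := by
  let F (x : α → G) : K := ρ.character
    (evalWord x (P ++ a :: (Q ++ b :: (R ++ invLetter a :: (S ++ invLetter b :: T)))) * g)
  have haverage : ∑ x, ∑ u, ∑ v, F (setLetter (setLetter x a u) b v) =
      (Nat.card G : K) ^ 2 * ∑ x, F x := by
    rw [sum_sum_setLetter a fun y => ∑ v, F (setLetter y b v), sum_sum_setLetter b F,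
      nsmul_eq_mul, nsmul_eq_mul, ← mul_assoc, pow_two]
  have hinner (x : α → G) :
      ρ.character 1 ^ 2 * ∑ u, ∑ v, F (setLetter (setLetter x a u) b v) =
        (Nat.card G : K) ^ 2 * ρ.character (evalWord x (P ++ S ++ R ++ Q ++ T) * g) := by
    simp only [F, evalWord_setLetter_setLetter_interleaved x hab ha hb, mul_assoc _ _ g]
    rw [character_one_sq_mul_sum_sum_character]
    simp only [evalWord_append, mul_assoc]
  refine mul_left_cancel₀ (pow_ne_zero 2 (NeZero.ne (Nat.card G : K))) ?_
  rw [mul_left_comm, ← haverage, Finset.mul_sum, Finset.mul_sum]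
  exact Finset.sum_congr rfl fun x _ => hinner x

theorem HasGenus.character_one_pow_mul_sum_character_evalWord {L : List (α × Bool)} {h : ℕ}
    (hh : HasGenus L h) (hL : IsAdmissible L) (g : G) :
    ρ.character 1 ^ (2 * h) * ∑ x : α → G, ρ.character (evalWord x L * g) =
      (Nat.card G : K) ^ Nat.card α * ρ.character g := by
  induction hh with
  | nil => simp
  | cancel P T a _ ih =>
    have hPT := (hL.of_perm (perm_cancelling P T a)).of_cons_cons
    rw [← ih hPT]
    simp
  | handle P Q R S T a b _ ih =>
    have ha := hL.of_perm (perm_interleaved P Q R S T a b)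
    have hb := ha.of_cons_cons
    rw [mul_add_one, pow_add, mul_assoc,
      character_one_sq_mul_sum_character_evalWord_interleaved ρ
        (ha.fst_ne_of_mem (c := b) (by simp)).symm
        (fun c hc => ha.fst_ne_of_mem (.tail _ (.tail _ hc))) (fun c hc => hb.fst_ne_of_mem hc),
      ih hb.of_cons_cons]

theorem HasGenus.apply_one_mul_sum_apply_lift_inv_mul {K : Type u} {G : Type v} [Field K]
    [IsAlgClosed K] [Group G] [Fintype G] [NeZero (Nat.card G : K)] {w : FreeGroup α} {h : ℕ}
    (hh : HasGenus w⁻¹.toWord h) (hpos : 0 < h) (hadm : IsAdmissible w⁻¹.toWord) {f : G → K}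
    (hf : f ∈ irrCharacters K G) (g : G) :
    f 1 * ∑ x : α → G, f ((FreeGroup.lift x w)⁻¹ * g) =
      (Nat.card G : K) ^ Nat.card α * (f g / f 1 ^ (2 * h - 1)) := by
  have hone := apply_one_ne_zero_of_mem_irrCharacters hf
  obtain ⟨V, hV, rfl⟩ := hf
  have := isIrreducible_of_simple V
  have hsum : V.character 1 ^ (2 * h) * ∑ x : α → G, V.character ((FreeGroup.lift x w)⁻¹ * g) =
      (Nat.card G : K) ^ Nat.card α * V.character g := by
    have h := hh.character_one_pow_mul_sum_character_evalWord V.ρ hadm g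
    simp only [evalWord, FreeGroup.mk_toWord, map_inv] at h
    exact h
  obtain ⟨k, hk⟩ : ∃ k, 2 * h = k + 1 := ⟨2 * h - 1, by omega⟩
  rw [hk, Nat.add_sub_cancel, mul_div_assoc', eq_div_iff (pow_ne_zero k hone), ← hsum, hk]
  ring

end WordMaps

theorem admissible_word_fourier_formula_general {α : Type*} [Finite α] [DecidableEq α]
    {w : FreeGroup α} (hw : w ≠ 1) (hadm : IsAdmissible w.toWord) :
    ∃ k : ℕ, Odd k ∧
      ∀ (K : Type u) [Field K] [IsAlgClosed K] (G : Type v) [Group G] [Finite G]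
        [NeZero (Nat.card G : K)] (g : G),
        (Nat.card {x : α → G // FreeGroup.lift x w = g} : K) =
          (Nat.card G : K) ^ (Nat.card α - 1) *
            ∑ᶠ f ∈ irrCharacters K G, f g / f 1 ^ k := by
  have hadm_inv : IsAdmissible w⁻¹.toWord := FreeGroup.toWord_inv w ▸ hadm.invRev
  obtain ⟨h, hh⟩ := hadm_inv.exists_hasGenus
  have hpos : 0 < h := hh.pos_of_isReduced FreeGroup.isReduced_toWord fun hnil =>
    hw (inv_eq_one.1 (FreeGroup.toWord_eq_nil_iff.1 hnil))
  obtain ⟨a, -⟩ := List.exists_mem_of_ne_nil _ (mt FreeGroup.toWord_eq_nil_iff.1 hw)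
  have : Nonempty α := ⟨a.1⟩
  refine ⟨2 * h - 1, ⟨h - 1, by omega⟩, fun K _ _ G _ _ _ g => ?_⟩
  have := Fintype.ofFinite α
  have := Fintype.ofFinite G
  refine mul_left_cancel₀ (NeZero.ne (Nat.card G : K)) ?_
  rw [card_mul_card_fiber_eq_sum_irrCharacters, ← mul_assoc, mul_pow_sub_one Nat.card_pos.ne',
    finsum_mem_eq_finite_toFinset_sum _ (finite_irrCharacters K G), Finset.mul_sum]
  exact Finset.sum_congr rfl fun f hf =>
    hh.apply_one_mul_sum_apply_lift_inv_mul hpos hadm_inv ((Set.Finite.mem_toFinset _).1 hf) g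

/-- Fourier expansion for admissible words: let `w ≠ 1` be a word in the free group on
`d ≥ 1` generators in which every variable occurs exactly once with exponent `1` and
exactly once with exponent `-1`.  Then there is a positive integer `k` (depending only
on `w`) such that for every finite group `G` and every `g ∈ G`, the number of solutions
of `w(g₁, …, g_d) = g` equals `|G|^{d-1} ∑_{χ ∈ Irr(G)} χ(g)/χ(1)^k`. -/
theorem admissible_word_fourier_formula (d : ℕ) (hd : 1 ≤ d) (w : FreeGroup (Fin d))
    (hw : w ≠ 1)
    (hadm : ∀ i : Fin d, w.toWord.count (i, true) = 1 ∧ w.toWord.count (i, false) = 1) :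
    ∃ k : ℕ, 0 < k ∧
      ∀ (G : Type) [Group G] [Fintype G] (g : G),
        (Nat.card {x : Fin d → G // FreeGroup.lift x w = g} : ℂ) =
          (Fintype.card G : ℂ) ^ (d - 1) *
            ∑ᶠ f ∈ {f : G → ℂ | ∃ V : FDRep ℂ G, Simple V ∧ f = V.character},
              f g / (f 1) ^ k := by
  obtain ⟨k, hk, h⟩ := admissible_word_fourier_formula_general hw
    (isAdmissible_of_forall_count_eq_one hadm)
  exact ⟨k, hk.pos, fun G _ _ g => by simpa [irrCharacters] using h ℂ G g⟩
end
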